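/- arXiv:2510.15807 — 2 statements merged into one kernel-verified Lean document; each statement's English description precedes it below -/
import Mathlib

section
/- For every integer n ≥ 1, the probability that all n random points are vertices of the random convex chain is P(N_n = n) = 2^n/(n!·(n+1)!). -/
open MeasureTheory
noncomputable section
/-- The triangle with vertices (0,0), (1,0), (0,1). -/
def T : Set (ℝ × ℝ) := convexHull ℝ {(0, 0), (1, 0), (0, 1)}

/-- The uniform distribution on `T`: twice Lebesgue measure restricted to `T`. -/
def μT : Measure (ℝ × ℝ) := (2 : ENNReal) • (volume.restrict T)

/-- Joint law of `n` independent uniform points in `T`. -/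
def P (n : ℕ) : Measure (Fin n → ℝ × ℝ) := Measure.pi fun _ => μT

/-- The random convex chain: convex hull of the points together with `(1,0)` and `(0,1)`. -/
def Tchain (n : ℕ) (ω : Fin n → ℝ × ℝ) : Set (ℝ × ℝ) :=
  convexHull ℝ (Set.range ω ∪ {(1, 0), (0, 1)})

/-- Normalized area `V_n = 2 vol(T_n)`. -/
def V (n : ℕ) (ω : Fin n → ℝ × ℝ) : ℝ := 2 * (volume (Tchain n ω)).toReal

/-- Number of vertices of `T_n` other than the two corners. -/
def N (n : ℕ) (ω : Fin n → ℝ × ℝ) : ℕ :=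
  (Set.extremePoints ℝ (Tchain n ω)).ncard - 2

/-- Normalized moments `q_{n,k} = C(n+k,k) E[V_n^k]`. -/
def q (n k : ℕ) : ℝ := ((n + k).choose k : ℝ) * ∫ ω, (V n ω) ^ k ∂ P n

/-- Probability generating function of `N_n`. -/
def G (n : ℕ) (t : ℝ) : ℝ := ∫ ω, t ^ (N n ω) ∂ P n

/-- Harmonic number. -/
def H (j : ℕ) : ℝ := ∑ i ∈ Finset.range j, 1 / ((i : ℝ) + 1)

/-- Generalized harmonic number of order 2. -/
def H2 (j : ℕ) : ℝ := ∑ i ∈ Finset.range j, 1 / ((i : ℝ) + 1) ^ 2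

/-- `c(k,ℓ)`: elementary symmetric polynomial `e_k` of `2/(j(j+1))`, `j = 1,…,ℓ`. -/
def c (k l : ℕ) : ℝ :=
  ∑ S ∈ (Finset.Icc 1 l).powersetCard k, ∏ j ∈ S, 2 / ((j : ℝ) * ((j : ℝ) + 1))

def T0 : Set (ℝ × ℝ) := {p | 0 < p.1 ∧ 0 < p.2 ∧ p.1 + p.2 < 1}

def Eset (n : ℕ) : Set (Fin n → ℝ × ℝ) :=
  {ω | (∀ j, ω j ∈ T0) ∧ ∀ j, ω j ∉ convexHull ℝ ({(0, 1), (1, 0)} ∪ ω '' {j}ᶜ)}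

lemma geo1 {α : ℝ} (hα : 1 < α) (S : Set (ℝ × ℝ)) (hS : ∀ z ∈ S, 0 < z.1) :
    ((0 : ℝ), (1 : ℝ)) ∉ convexHull ℝ ({(0, α), (1, 0)} ∪ S) := by
  intro h
  have hc : Convex ℝ {p : ℝ × ℝ | 0 < p.1 ∨ p = (0, α)} := by
    intro p hp r hr a b ha hb hab
    simp only [Set.mem_ofPred_eq] at hp hr ⊢
    rcases hp with hp | rfl <;> rcases hr with hr | rfl
    · left
      simp only [Prod.fst_add, Prod.smul_fst, smul_eq_mul]
      rcases ha.lt_or_eq with h | h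
      · have := mul_pos h hp
        have := mul_nonneg hb hr.le
        linarith
      · have : b = 1 := by linarith
        subst this; rw [← h]; linarith
    · rcases ha.lt_or_eq with h | h
      · left
        simpa using mul_pos h hp
      · right
        have : b = 1 := by linarith
        subst this; rw [← h]; simp
    · rcases hb.lt_or_eq with h | h
      · left
        simpa using mul_pos h hr
      · right
        have : a = 1 := by linarith
        subst this; rw [← h]; simp
    · right
      rw [← add_smul, hab, one_smul]
  have := convexHull_min (s := ({(0, α), (1, 0)} ∪ S)) (by
    rintro z ((rfl | rfl) | hz)
    · right; rfl
    · left; norm_num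
    · left; exact hS z hz) hc h
  simp at this
  linarith

lemma geo2 {α : ℝ} (hα : 1 < α) (S : Set (ℝ × ℝ))
    (hS : ∀ z ∈ S, z ∈ T0) (z : ℝ × ℝ) (hz : z ∈ T0)
    (h : z ∈ convexHull ℝ (insert (0, α) ({(0, 1), (1, 0)} ∪ S))) :
    z ∈ convexHull ℝ ({(0, 1), (1, 0)} ∪ S) := by
  set K := convexHull ℝ ({((0 : ℝ), (1 : ℝ)), (1, 0)} ∪ S) with hK
  have hKc : Convex ℝ K := convex_convexHull _ _
  have hX : ((0 : ℝ), (1 : ℝ)) ∈ K := subset_convexHull _ _ (by simp)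
  have hC : ((1 : ℝ), (0 : ℝ)) ∈ K := subset_convexHull _ _ (by simp)
  have hKT : K ⊆ {p | 0 ≤ p.1 ∧ 0 ≤ p.2 ∧ p.1 + p.2 ≤ 1} := by
    apply convexHull_min
    · rintro z ((rfl | rfl) | hz)
      · norm_num
      · norm_num
      · obtain ⟨h1, h2, h3⟩ := hS z hz
        exact ⟨h1.le, h2.le, h3.le⟩
    · intro p hp r hr a b ha hb hab
      simp only [Set.mem_ofPred_eq, Prod.fst_add, Prod.smul_fst, smul_eq_mul, Prod.snd_add,
        Prod.smul_snd] at hp hr ⊢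
      obtain ⟨h1, h2, h3⟩ := hp
      obtain ⟨h4, h5, h6⟩ := hr
      refine ⟨by positivity, by positivity, ?_⟩
      nlinarith [mul_le_mul_of_nonneg_left h3 ha, mul_le_mul_of_nonneg_left h6 hb]
  rw [convexHull_insert ⟨((0 : ℝ), (1 : ℝ)), by simp⟩, ← hK, convexJoin_singleton_left] at h
  simp only [Set.mem_iUnion] at h
  obtain ⟨Q, hQ, a, b, ha, hb, hab, rfl⟩ := h
  obtain ⟨q1, q2⟩ := Q
  obtain ⟨h1, h2, h3⟩ := hKT hQ
  obtain ⟨g1, g2, g3⟩ := hz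
  simp only [Prod.smul_mk, smul_eq_mul, mul_zero, Prod.mk_add_mk, zero_add] at g1 g2 g3 h1 h2 h3 ⊢
  have hb' : b = 1 - a := by linarith
  subst hb'
  have ha1 : a < 1 := by
    rcases hb.lt_or_eq with h | h
    · linarith
    · rw [← h] at g1; simp at g1
  have fQ : q1 + q2 < 1 := by
    by_contra hh
    have : q1 + q2 = 1 := by linarith
    have : (1 - a) * q1 + (a * α + (1 - a) * q2) = a * α + (1 - a) * (q1 + q2) := by ring
    nlinarith
  set D := α - (q1 + q2) with hD
  have hDp : 0 < D := by linarith
  set t := (1 - (q1 + q2)) / D with ht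
  have ht0 : 0 < t := div_pos (by linarith) hDp
  have htD : t * D = 1 - (q1 + q2) := by rw [ht]; field_simp
  have ht1 : t < 1 := by rw [ht, div_lt_one hDp]; linarith
  have hat : a ≤ t := by rw [ht, le_div_iff₀ hDp, hD]; nlinarith
  have hR : ((1 - t) * q1, t * α + (1 - t) * q2) ∈ K := by
    have := hKc hX hC (a := t * α + (1 - t) * q2) (b := (1 - t) * q1)
      (add_nonneg (by nlinarith) (mul_nonneg (by linarith) h2)) (mul_nonneg (by linarith) h1)
      (by rw [hD] at htD; linarith)
    simpa using this
  have := hKc hR hQ (a := a / t) (b := 1 - a / t) (by positivity)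
    (by rw [sub_nonneg, div_le_one ht0]; exact hat) (by ring)
  convert this using 1
  ext
  · simp; field_simp; ring
  · simp; field_simp; ring

lemma geo3 {α : ℝ} (hα : 1 < α) (z : ℝ × ℝ) (h1 : 0 ≤ z.1) (h3 : 1 ≤ z.1 + z.2)
    (h4 : z.1 + z.2 / α < 1) (S : Set (ℝ × ℝ)) (hA : (0, α) ∈ S) (hX : (0, 1) ∈ S)
    (hC : (1, 0) ∈ S) : z ∈ convexHull ℝ S := by
  have hc : Convex ℝ (convexHull ℝ S) := convex_convexHull _ _
  have h4' : z.2 < (1 - z.1) * α := by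
    have : z.2 / α < 1 - z.1 := by linarith
    rwa [div_lt_iff₀ (by linarith)] at this
  have hα' : 0 < α - 1 := by linarith
  have hl : 0 ≤ (z.2 - (1 - z.1)) / (α - 1) := div_nonneg (by linarith) hα'.le
  have hm : (z.2 - (1 - z.1)) / (α - 1) ≤ 1 - z.1 := by
    rw [div_le_iff₀ hα']; nlinarith
  have := hc.sum_mem (t := Finset.univ)
    (w := ![(z.2 - (1 - z.1)) / (α - 1), 1 - z.1 - (z.2 - (1 - z.1)) / (α - 1), z.1])
    (z := ![(0, α), (0, 1), (1, 0)])
    (by intro i _; fin_cases i <;> simp <;> linarith)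
    (by simp [Fin.sum_univ_three])
    (by intro i _; fin_cases i <;> simp <;> apply subset_convexHull <;> assumption)
  convert this using 1
  ext
  · simp [Fin.sum_univ_three]
  · simp [Fin.sum_univ_three]; field_simp; ring

lemma image_range_insert {n : ℕ} (Z : Fin n → ℝ × ℝ) (k : Fin n) :
    Set.range Z = insert (Z k) (Z '' {k}ᶜ) := by
  rw [← Set.image_univ, ← Set.image_insert_eq]
  congr 1
  ext j; simp [em]

lemma fwd {α : ℝ} (hα : 1 < α) {n : ℕ} (Z : Fin n → ℝ × ℝ)
    (h1 : ∀ k, 0 ≤ (Z k).1) (h2 : ∀ k, 0 < (Z k).2) (h3 : ∀ k, (Z k).1 + (Z k).2 / α < 1)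
    (ha : ((0 : ℝ), (1 : ℝ)) ∉ convexHull ℝ ({(0, α), (1, 0)} ∪ Set.range Z))
    (hb : ∀ k, Z k ∉ convexHull ℝ ({(0, α), (1, 0)} ∪ insert (0, 1) (Z '' {k}ᶜ))) :
    Z ∈ Eset n := by
  have key : ∀ k, (Z k).1 + (Z k).2 < 1 := by
    intro k
    by_contra h
    exact hb k (geo3 hα (Z k) (h1 k) (not_lt.1 h) (h3 k) _ (by simp) (by simp) (by simp))
  refine ⟨fun k => ⟨?_, h2 k, key k⟩, ?_⟩
  · rcases (h1 k).lt_or_eq with h | h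
    · exact h
    · exfalso
      apply ha
      have hk : (Z k).2 < 1 := by have := key k; linarith
      have hc := convex_convexHull ℝ ({((0 : ℝ), α), (1, 0)} ∪ Set.range Z)
      have hd : 0 < α - (Z k).2 := by linarith
      have := hc (x := (0, α)) (y := Z k) (subset_convexHull _ _ (by simp))
        (subset_convexHull _ _ (by simp)) (a := (1 - (Z k).2) / (α - (Z k).2))
        (b := 1 - (1 - (Z k).2) / (α - (Z k).2)) (div_nonneg (by linarith) hd.le)
        (by rw [sub_nonneg, div_le_one hd]; linarith) (by ring)
      convert this using 1
      ext
      · simp [← h]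
      · simp; field_simp; ring
  · intro k hk
    refine hb k (convexHull_mono ?_ hk)
    rintro z ((rfl | rfl) | hz)
    · simp
    · simp
    · exact Or.inr (Or.inr hz)

lemma bwd {α : ℝ} (hα : 1 < α) {n : ℕ} (Z : Fin n → ℝ × ℝ) (hZ : Z ∈ Eset n) :
    ((0 : ℝ), (1 : ℝ)) ∉ convexHull ℝ ({(0, α), (1, 0)} ∪ Set.range Z) ∧
    ∀ k, Z k ∉ convexHull ℝ ({(0, α), (1, 0)} ∪ insert (0, 1) (Z '' {k}ᶜ)) := by
  refine ⟨geo1 hα _ (by rintro _ ⟨k, rfl⟩; exact (hZ.1 k).1), ?_⟩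
  intro k hk
  refine hZ.2 k (geo2 hα _ ?_ _ (hZ.1 k) (convexHull_mono ?_ hk))
  · rintro _ ⟨j, _, rfl⟩; exact hZ.1 j
  · rintro z ((rfl | rfl) | (rfl | hz))
    · simp
    · simp
    · simp
    · exact Or.inr (Or.inr hz)

/-- linear part -/
def Lin (X : ℝ × ℝ) : (ℝ × ℝ) →ₗ[ℝ] (ℝ × ℝ) :=
  Matrix.toLin (Module.Basis.finTwoProd ℝ) (Module.Basis.finTwoProd ℝ)
    !![(1 - X.2) / (1 - X.1 - X.2), X.1 / (1 - X.1 - X.2); 0, 1 / X.2]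

lemma Lin_apply (X p : ℝ × ℝ) : Lin X p =
    ((1 - X.2) / (1 - X.1 - X.2) * p.1 + X.1 / (1 - X.1 - X.2) * p.2, 1 / X.2 * p.2) := by
  rw [Lin, Matrix.toLin_finTwoProd_apply]; simp

lemma Lin_det (X : ℝ × ℝ) : LinearMap.det (Lin X) = (1 - X.2) / (1 - X.1 - X.2) * (1 / X.2) := by
  simp [Lin, Matrix.det_fin_two]

def psi (X : ℝ × ℝ) : (ℝ × ℝ) →ᵃ[ℝ] (ℝ × ℝ) :=
  (Lin X).toAffineMap + AffineMap.const ℝ (ℝ × ℝ) (-X.1 / (1 - X.1 - X.2), (0 : ℝ))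

lemma psi_apply (X p : ℝ × ℝ) : psi X p =
    ((1 - X.2) / (1 - X.1 - X.2) * p.1 + X.1 / (1 - X.1 - X.2) * p.2 + -X.1 / (1 - X.1 - X.2),
      1 / X.2 * p.2) := by
  simp [psi, Lin_apply]

lemma psi_inj {X : ℝ × ℝ} (hX : X ∈ T0) : Function.Injective (psi X) := by
  obtain ⟨h1, h2, h3⟩ := hX
  intro p r h
  simp only [psi_apply, Prod.mk.injEq] at h
  obtain ⟨h4, h5⟩ := h
  have e2 : p.2 = r.2 := mul_left_cancel₀ (by positivity) h5
  rw [e2] at h4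
  have e1 : p.1 = r.1 := mul_left_cancel₀ (a := (1 - X.2) / (1 - X.1 - X.2))
    (div_pos (by linarith) (by linarith)).ne' (by linarith)
  exact Prod.ext e1 e2

lemma psi_hull {X : ℝ × ℝ} (hX : X ∈ T0) (p : ℝ × ℝ) (S : Set (ℝ × ℝ)) :
    p ∈ convexHull ℝ S ↔ psi X p ∈ convexHull ℝ (psi X '' S) := by
  rw [← AffineMap.image_convexHull, (psi_inj hX).mem_set_image]

lemma psi_A (X : ℝ × ℝ) : psi X (0, 1) = (0, 1 / X.2) := by
  rw [psi_apply]; simp; ring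

lemma psi_C {X : ℝ × ℝ} (hX : X ∈ T0) : psi X (1, 0) = (1, 0) := by
  obtain ⟨h1, h2, h3⟩ := hX
  have : 1 - X.1 - X.2 ≠ 0 := by linarith
  rw [psi_apply]; simp; field_simp; ring

lemma psi_X {X : ℝ × ℝ} (hX : X ∈ T0) : psi X X = (0, 1) := by
  obtain ⟨h1, h2, h3⟩ := hX
  have : 1 - X.1 - X.2 ≠ 0 := by linarith
  rw [psi_apply]; ext
  · simp; field_simp; ring
  · simp; field_simp

lemma psi_fst {X : ℝ × ℝ} (hX : X ∈ T0) (p : ℝ × ℝ) :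
    (psi X p).1 * (1 - X.1 - X.2) = p.1 * (1 - X.2) - X.1 * (1 - p.2) := by
  obtain ⟨h1, h2, h3⟩ := hX
  have : 1 - X.1 - X.2 ≠ 0 := by linarith
  rw [psi_apply]; simp; field_simp; ring

lemma psi_snd {X : ℝ × ℝ} (hX : X ∈ T0) (p : ℝ × ℝ) :
    (psi X p).2 * X.2 = p.2 := by
  obtain ⟨h1, h2, h3⟩ := hX
  rw [psi_apply]; simp; field_simp

lemma transfer {n : ℕ} (ω : Fin (n + 1) → ℝ × ℝ) (i : Fin (n + 1)) (hX : ω i ∈ T0) :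
    (∀ j, ω j ∉ convexHull ℝ ({(0, 1), (1, 0)} ∪ ω '' {j}ᶜ)) ↔
    (((0 : ℝ), (1 : ℝ)) ∉ convexHull ℝ ({(0, 1 / (ω i).2), (1, 0)} ∪
        Set.range (fun j => psi (ω i) (ω (i.succAbove j)))) ∧
    ∀ k, psi (ω i) (ω (i.succAbove k)) ∉ convexHull ℝ ({(0, 1 / (ω i).2), (1, 0)} ∪ insert (0, 1)
      ((fun j => psi (ω i) (ω (i.succAbove j))) '' {k}ᶜ))) := by
  rw [Fin.forall_iff_succAbove i]
  refine and_congr ?_ (forall_congr' fun k => ?_)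
  · rw [psi_hull hX, psi_X hX, Set.image_union, Set.image_pair, psi_A, psi_C hX,
      Set.image_image, ← Fin.range_succAbove, ← Set.range_comp]
    rfl
  · rw [psi_hull hX, Set.image_union, Set.image_pair, psi_A, psi_C hX]
    have : ω '' {i.succAbove k}ᶜ = insert (ω i) ((fun j => ω (i.succAbove j)) '' {k}ᶜ) := by
      ext z
      simp only [Set.mem_image, Set.mem_insert_iff, Set.mem_compl_iff, Set.mem_singleton_iff]
      rw [Fin.exists_iff_succAbove i]
      simp [Fin.ne_succAbove, eq_comm]
    rw [this, Set.image_insert_eq, psi_X hX, Set.image_image]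

lemma key {n : ℕ} (ω : Fin (n + 1) → ℝ × ℝ) : ω ∈ Eset (n + 1) ↔
    ∃ i, ω i ∈ T0 ∧ (fun j => psi (ω i) (ω (i.succAbove j))) ∈ Eset n := by
  constructor
  · rintro ⟨h1, h2⟩
    obtain ⟨i, hi⟩ := Finite.exists_min (fun i => (ω i).1 / (1 - (ω i).2))
    refine ⟨i, h1 i, ?_⟩
    obtain ⟨ha, hb⟩ := (transfer ω i (h1 i)).1 h2
    obtain ⟨x0, y0, xy⟩ := h1 i
    have hα : 1 < 1 / (ω i).2 := by rw [lt_div_iff₀ y0]; linarith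
    refine fwd hα _ (fun k => ?_) (fun k => ?_) (fun k => ?_) ha hb
    · have h := psi_fst (h1 i) (ω (i.succAbove k))
      obtain ⟨p0, q0, pq⟩ := h1 (i.succAbove k)
      have := hi (i.succAbove k)
      rw [div_le_div_iff₀ (by linarith) (by linarith)] at this
      by_contra hh
      push Not at hh
      have := mul_neg_of_neg_of_pos hh (show 0 < 1 - (ω i).1 - (ω i).2 by linarith)
      linarith
    · have h := psi_snd (h1 i) (ω (i.succAbove k))
      have := (h1 (i.succAbove k)).2.1
      rw [← h] at this
      exact pos_of_mul_pos_left this y0.le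
    · have h := psi_fst (h1 i) (ω (i.succAbove k))
      have h' := psi_snd (h1 i) (ω (i.succAbove k))
      obtain ⟨p0, q0, pq⟩ := h1 (i.succAbove k)
      rw [div_div_eq_mul_div, div_one, h']
      have hd : 0 < 1 - (ω i).1 - (ω i).2 := by linarith
      refine lt_of_mul_lt_mul_right ?_ hd.le
      rw [add_mul, h]
      nlinarith
  · rintro ⟨i, hX, hE⟩
    have hX' := hX
    obtain ⟨x0, y0, xy⟩ := hX
    have hα : 1 < 1 / (ω i).2 := by rw [lt_div_iff₀ y0]; linarith
    refine ⟨?_, (transfer ω i hX').2 (bwd hα _ hE)⟩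
    rw [Fin.forall_iff_succAbove i]
    refine ⟨hX', fun k => ?_⟩
    have h := psi_fst hX' (ω (i.succAbove k))
    have h' := psi_snd hX' (ω (i.succAbove k))
    obtain ⟨u0, v0, uv⟩ := hE.1 k
    simp only at u0 v0 uv
    have hd : 0 < 1 - (ω i).1 - (ω i).2 := by linarith
    generalize psi (ω i) (ω (i.succAbove k)) = Z at *
    generalize (ω (i.succAbove k)) = Y at *
    generalize ω i = X at *
    have hq : 0 < Y.2 := by rw [← h']; positivity
    have hq1 : Y.2 < 1 := by nlinarith
    refine ⟨?_, hq, ?_⟩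
    · have : 0 < Y.1 * (1 - X.2) := by nlinarith [mul_pos u0 hd, mul_pos x0 (sub_pos.2 hq1)]
      exact pos_of_mul_pos_left this (by linarith)
    · have : (Y.1 + Y.2 - 1) * (1 - X.2) < 0 := by
        have e : (Y.1 + Y.2 - 1) * (1 - X.2) = (Z.1 + Z.2 * X.2 - 1) * (1 - X.1 - X.2) := by
          rw [h']; linarith
        rw [e]
        refine mul_neg_of_neg_of_pos ?_ hd
        nlinarith
      by_contra hh
      nlinarith

lemma uniq {n : ℕ} (ω : Fin (n + 1) → ℝ × ℝ) (i i' : Fin (n + 1)) (hX : ω i ∈ T0)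
    (h : (fun j => psi (ω i) (ω (i.succAbove j))) ∈ Eset n) (hX' : ω i' ∈ T0)
    (h' : (fun j => psi (ω i') (ω (i'.succAbove j))) ∈ Eset n) : i = i' := by
  by_contra hne
  obtain ⟨k, hk⟩ := Fin.exists_succAbove_eq (Ne.symm hne)
  obtain ⟨k', hk'⟩ := Fin.exists_succAbove_eq hne
  have a := (h.1 k).1
  have b := (h'.1 k').1
  simp only [hk, hk'] at a b
  have e := psi_fst hX (ω i')
  have e' := psi_fst hX' (ω i)
  obtain ⟨_, _, h3⟩ := hX
  obtain ⟨_, _, h6⟩ := hX'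
  have := mul_pos a (show 0 < 1 - (ω i).1 - (ω i).2 by linarith)
  have := mul_pos b (show 0 < 1 - (ω i').1 - (ω i').2 by linarith)
  linarith

lemma ext_of_notMem {S : Set (ℝ × ℝ)} {x : ℝ × ℝ} (hx : x ∈ S)
    (h : x ∉ convexHull ℝ (S \ {x})) : x ∈ Set.extremePoints ℝ (convexHull ℝ S) := by
  have hS : S = insert x (S \ {x}) := by simp [Set.insert_eq_of_mem hx]
  by_cases hne : (S \ {x}).Nonempty
  swap
  · rw [Set.not_nonempty_iff_eq_empty] at hne
    rw [hS, hne]; simp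
  have hdec : ∀ p ∈ convexHull ℝ S, ∃ k ∈ convexHull ℝ (S \ {x}), ∃ a b : ℝ, 0 ≤ a ∧ 0 ≤ b ∧
      a + b = 1 ∧ a • x + b • k = p := by
    intro p hp
    rw [hS, convexHull_insert hne, convexJoin_singleton_left] at hp
    simp only [Set.mem_iUnion] at hp
    obtain ⟨k, hk, a, b, h1, h2, h3, h4⟩ := hp
    exact ⟨k, hk, a, b, h1, h2, h3, h4⟩
  rw [mem_extremePoints_iff_left]
  refine ⟨subset_convexHull _ _ hx, fun p hp r hr hseg => ?_⟩
  obtain ⟨k1, hk1, a1, b1, ha1, hb1, hab1, rfl⟩ := hdec p hp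
  obtain ⟨k2, hk2, a2, b2, ha2, hb2, hab2, rfl⟩ := hdec r hr
  obtain ⟨l, m, hl, hm, hlm, he⟩ := hseg
  rcases hb1.lt_or_eq with hb | hb
  swap
  · have : a1 = 1 := by linarith
    rw [← hb, this]; simp
  exfalso
  apply h
  have hc : 0 < l * b1 + m * b2 := by positivity
  have := convex_convexHull ℝ (S \ {x}) hk1 hk2 (a := l * b1 / (l * b1 + m * b2))
    (b := m * b2 / (l * b1 + m * b2)) (by positivity) (by positivity) (by field_simp)
  convert this using 1
  have e1 := congrArg Prod.fst he
  have e2 := congrArg Prod.snd he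
  obtain rfl : a1 = 1 - b1 := by linarith
  obtain rfl : a2 = 1 - b2 := by linarith
  obtain rfl : l = 1 - m := by linarith
  simp at e1 e2
  ext
  · simp; field_simp; linarith
  · simp; field_simp; linarith

lemma ext_A {S : Set (ℝ × ℝ)} (hS : ∀ z ∈ S, z ≠ (0, 1) → z.2 < 1) (hA : (0, 1) ∈ S) :
    (0, 1) ∈ Set.extremePoints ℝ (convexHull ℝ S) := by
  apply ext_of_notMem hA
  intro h
  have := convexHull_min (t := {p : ℝ × ℝ | p.2 < 1}) (fun z hz => hS z hz.1 hz.2)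
    (convex_halfSpace_lt (IsLinearMap.mk (fun _ _ => rfl) (fun _ _ => rfl)) 1) h
  simp at this

lemma ext_C {S : Set (ℝ × ℝ)} (hS : ∀ z ∈ S, z ≠ (1, 0) → z.1 < 1) (hA : (1, 0) ∈ S) :
    (1, 0) ∈ Set.extremePoints ℝ (convexHull ℝ S) := by
  apply ext_of_notMem hA
  intro h
  have := convexHull_min (t := {p : ℝ × ℝ | p.1 < 1}) (fun z hz => hS z hz.1 hz.2)
    (convex_halfSpace_lt (IsLinearMap.mk (fun _ _ => rfl) (fun _ _ => rfl)) 1) h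
  simp at this

lemma N_iff {n : ℕ} (hn : 1 ≤ n) (ω : Fin n → ℝ × ℝ) (hω : ∀ j, ω j ∈ T0) :
    N n ω = n ↔ ω ∈ Eset n := by
  have hfin : (Set.range ω).Finite := Set.finite_range ω
  have hdisj : ∀ j, ω j ≠ (0, 1) ∧ ω j ≠ (1, 0) := by
    intro j
    have := hω j
    constructor <;> intro h <;> rw [h] at this <;> obtain ⟨h1, h2, h3⟩ := this <;> simp at h1 h2
  have hpair : ({((1 : ℝ), (0 : ℝ)), (0, 1)} : Set (ℝ × ℝ)).ncard = 2 := Set.ncard_pair (by simp)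
  have hcard : (Set.range ω ∪ {(1, 0), (0, 1)}).ncard = (Set.range ω).ncard + 2 := by
    rw [Set.ncard_union_eq ?_ hfin (by simp), hpair]
    rw [Set.disjoint_left]
    rintro _ ⟨j, rfl⟩ h
    rcases h with h | h
    · exact (hdisj j).2 h
    · exact (hdisj j).1 h
  have hrange : (Set.range ω).ncard ≤ n := by
    rw [← Set.image_univ]
    refine (Set.ncard_image_le Set.finite_univ).trans ?_
    simp [Set.ncard_univ]
  have hsub : Set.extremePoints ℝ (Tchain n ω) ⊆ Set.range ω ∪ {(1, 0), (0, 1)} :=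
    extremePoints_convexHull_subset
  have hSfin : (Set.range ω ∪ {((1 : ℝ), (0 : ℝ)), (0, 1)}).Finite := hfin.union (by simp)
  constructor
  · intro h
    unfold N at h
    have h1 := Set.ncard_le_ncard hsub hSfin
    have heq := Set.eq_of_subset_of_ncard_le hsub (by omega) hSfin
    have hinj : Function.Injective ω := by
      rw [← Set.injOn_univ]
      apply Set.injOn_of_ncard_image_eq _ Set.finite_univ
      rw [Set.image_univ, Set.ncard_univ, Nat.card_fin]
      omega
    refine ⟨hω, fun j hj => ?_⟩
    have hext : ω j ∈ Set.extremePoints ℝ (Tchain n ω) := by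
      rw [heq]; left; exact ⟨j, rfl⟩
    rw [Tchain, (convex_convexHull ℝ _).mem_extremePoints_iff_mem_sdiff_convexHull_sdiff] at hext
    refine hext.2 (convexHull_mono ?_ hj)
    rintro z ((rfl | rfl) | ⟨k, hk, rfl⟩)
    · exact ⟨subset_convexHull _ _ (by simp), (hdisj j).1.symm⟩
    · exact ⟨subset_convexHull _ _ (by simp), (hdisj j).2.symm⟩
    · exact ⟨subset_convexHull _ _ (by simp), fun h => hk (hinj h)⟩
  · rintro ⟨-, hE⟩
    have hinj : Function.Injective ω := by
      intro i j hij
      by_contra hne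
      exact hE j (subset_convexHull _ _ (Or.inr ⟨i, hne, hij⟩))
    have hr : (Set.range ω).ncard = n := by
      rw [← Set.image_univ, Set.ncard_image_of_injective _ hinj, Set.ncard_univ, Nat.card_fin]
    have heq : Set.extremePoints ℝ (Tchain n ω) = Set.range ω ∪ {(1, 0), (0, 1)} := by
      refine hsub.antisymm ?_
      rintro z (⟨j, rfl⟩ | (rfl | rfl))
      · refine ext_of_notMem (Or.inl ⟨j, rfl⟩) fun h => hE j (convexHull_mono ?_ h)
        rintro z ⟨⟨k, rfl⟩ | (rfl | rfl), hz⟩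
        · right; exact ⟨k, fun h => hz (congrArg ω h), rfl⟩
        · simp
        · simp
      · refine ext_C ?_ (by simp)
        rintro z (⟨j, rfl⟩ | (rfl | rfl)) hz
        · obtain ⟨h1, h2, h3⟩ := hω j; linarith
        · exact absurd rfl hz
        · simp
      · refine ext_A ?_ (by simp)
        rintro z (⟨j, rfl⟩ | (rfl | rfl)) hz
        · obtain ⟨h1, h2, h3⟩ := hω j; linarith
        · simp
        · exact absurd rfl hz
    unfold N
    rw [heq, hcard, hr]; omega

lemma pi_smul_const (n : ℕ) (r : NNReal) (ν : Measure (ℝ × ℝ)) [SigmaFinite ν] :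
    Measure.pi (fun _ : Fin n => (r : ENNReal) • ν) = (r : ENNReal) ^ n • Measure.pi (fun _ => ν) := by
  have : SigmaFinite ((r : ENNReal) • ν) :=
    inferInstanceAs (SigmaFinite (r • ν))
  refine (Measure.pi_eq fun s _ => ?_)
  simp [Measure.pi_pi, Finset.prod_mul_distrib]

lemma T0_meas : MeasurableSet T0 := by
  have : IsOpen T0 := by
    apply (isOpen_lt continuous_const continuous_fst).inter
    apply (isOpen_lt continuous_const continuous_snd).inter
    exact isOpen_lt (continuous_fst.add continuous_snd) continuous_const
  exact this.measurableSet

lemma T_ae : (T : Set (ℝ × ℝ)) =ᵐ[volume] T0 := by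
  have h1 : T0 ⊆ T := by
    rintro p ⟨h1, h2, h3⟩
    have := (convex_convexHull ℝ ({(0, 0), (1, 0), (0, 1)} : Set (ℝ × ℝ))).sum_mem
      (t := Finset.univ) (w := ![1 - p.1 - p.2, p.1, p.2]) (z := ![(0, 0), (1, 0), (0, 1)])
      (by intro i _; fin_cases i <;> simp <;> linarith)
      (by simp [Fin.sum_univ_three]; ring)
      (by intro i _; fin_cases i <;> apply subset_convexHull <;> simp)
    unfold T
    convert this using 1
    ext <;> simp [Fin.sum_univ_three]
  have h2 : T ⊆ {p : ℝ × ℝ | 0 ≤ p.1 ∧ 0 ≤ p.2 ∧ p.1 + p.2 ≤ 1} := by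
    apply convexHull_min
    · rintro z (rfl | rfl | rfl) <;> norm_num
    · intro p hp r hr a b ha hb hab
      simp only [Set.mem_ofPred_eq, Prod.fst_add, Prod.smul_fst, smul_eq_mul, Prod.snd_add,
        Prod.smul_snd] at hp hr ⊢
      obtain ⟨h1, h2, h3⟩ := hp
      obtain ⟨h4, h5, h6⟩ := hr
      refine ⟨by positivity, by positivity, ?_⟩
      nlinarith [mul_le_mul_of_nonneg_left h3 ha, mul_le_mul_of_nonneg_left h6 hb]
  have hx : volume ({0} ×ˢ Set.univ : Set (ℝ × ℝ)) = 0 := by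
    rw [Measure.volume_eq_prod, Measure.prod_prod]; simp
  have hy : volume (Set.univ ×ˢ {0} : Set (ℝ × ℝ)) = 0 := by
    rw [Measure.volume_eq_prod, Measure.prod_prod]; simp
  have hxy : volume ({p : ℝ × ℝ | p.1 + p.2 = 1}) = 0 := by
    rw [Measure.volume_eq_prod, Measure.measure_prod_null]
    · refine Filter.Eventually.of_forall fun x => ?_
      have : Prod.mk x ⁻¹' {p : ℝ × ℝ | p.1 + p.2 = 1} = {1 - x} := by
        ext y
        simp only [Set.mem_preimage, Set.mem_ofPred_eq, Set.mem_singleton_iff]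
        constructor <;> intro h <;> linarith
      change volume (Prod.mk x ⁻¹' {p : ℝ × ℝ | p.1 + p.2 = 1}) = 0
      rw [this]; simp
    · exact (isClosed_eq (continuous_fst.add continuous_snd) continuous_const).measurableSet
  refine (ae_eq_set).2 ⟨?_, ?_⟩
  · refine measure_mono_null ?_ (measure_union_null hx (measure_union_null hy hxy))
    rintro p ⟨hp, hp'⟩
    obtain ⟨a, b, d⟩ := h2 hp
    by_cases e1 : p.1 = 0
    · left; exact ⟨e1, trivial⟩
    by_cases e2 : p.2 = 0
    · right; left; exact ⟨trivial, e2⟩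
    right; right
    by_contra e3
    exact hp' ⟨lt_of_le_of_ne a (Ne.symm e1), lt_of_le_of_ne b (Ne.symm e2), lt_of_le_of_ne d e3⟩
  · rw [Set.sdiff_eq_empty.2 h1]; simp

lemma P_eq (n : ℕ) : P n = (2 : ENNReal) ^ n •
    ((volume : Measure (Fin n → ℝ × ℝ)).restrict (Set.univ.pi fun _ => T0)) := by
  unfold P μT
  rw [Measure.restrict_congr_set T_ae]
  have := pi_smul_const n 2 (volume.restrict T0)
  rw [ENNReal.coe_ofNat] at this
  rw [this, volume_pi, Measure.restrict_pi_pi]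

lemma map_psi {X : ℝ × ℝ} (hX : X ∈ T0) : Measure.map (psi X) volume =
    ENNReal.ofReal (X.2 * (1 - X.1 / (1 - X.2))) • (volume : Measure (ℝ × ℝ)) := by
  obtain ⟨h1, h2, h3⟩ := hX
  have hd : 0 < 1 - X.1 - X.2 := by linarith
  have hy : 0 < 1 - X.2 := by linarith
  have hpos : 0 < LinearMap.det (Lin X) := by rw [Lin_det]; positivity
  have e : (psi X : ℝ × ℝ → ℝ × ℝ) =
      (fun p => p + (-X.1 / (1 - X.1 - X.2), (0 : ℝ))) ∘ (Lin X) := by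
    ext p <;> simp [psi]
  have hm : Measurable (Lin X) := (LinearMap.continuous_of_finiteDimensional (Lin X)).measurable
  rw [e, ← Measure.map_map (measurable_add_const _) hm,
    Measure.map_linearMap_addHaar_eq_smul_addHaar _ hpos.ne', Measure.map_smul,
    map_add_right_eq_self, abs_of_pos (inv_pos.2 hpos), Lin_det]
  congr 2
  field_simp; ring

lemma slice {X : ℝ × ℝ} (hX : X ∈ T0) {n : ℕ} {S : Set (Fin n → ℝ × ℝ)} (hS : MeasurableSet S) :
    volume {Y : Fin n → ℝ × ℝ | (fun j => psi X (Y j)) ∈ S} =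
      ENNReal.ofReal (X.2 * (1 - X.1 / (1 - X.2))) ^ n * volume S := by
  have hm : Measurable (psi X) := (AffineMap.continuous_of_finiteDimensional (psi X)).measurable
  have hm' : Measurable (fun (Y : Fin n → ℝ × ℝ) j => psi X (Y j)) :=
    measurable_pi_lambda _ fun j => hm.comp (measurable_pi_apply j)
  change volume ((fun (Y : Fin n → ℝ × ℝ) j => psi X (Y j)) ⁻¹' S) = _
  rw [← Measure.map_apply hm' hS, volume_pi]
  have : SigmaFinite (Measure.map (psi X) volume) := by
    rw [map_psi hX]
    exact inferInstanceAs
      (SigmaFinite ((X.2 * (1 - X.1 / (1 - X.2))).toNNReal • (volume : Measure (ℝ × ℝ))))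
  rw [Measure.pi_map_pi (fun _ => hm.aemeasurable), map_psi hX]
  have := pi_smul_const n (X.2 * (1 - X.1 / (1 - X.2))).toNNReal volume
  unfold ENNReal.ofReal
  rw [this]; rfl

lemma inner_int {y : ℝ} (hy0 : 0 < y) (hy : y < 1) (n : ℕ) :
    ∫⁻ x in Set.Ioo 0 (1 - y), ENNReal.ofReal ((y * (1 - x / (1 - y))) ^ n) =
      ENNReal.ofReal (y ^ n * (1 - y) / (n + 1)) := by
  have hz : 0 < 1 - y := by linarith
  rw [← ofReal_integral_eq_lintegral_ofReal]
  · congr 1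
    rw [← integral_Ioc_eq_integral_Ioo, ← intervalIntegral.integral_of_le hz.le]
    have hder : ∀ x ∈ Set.uIcc 0 (1 - y), HasDerivAt
        (fun x => - (y ^ n * (1 - y) / (n + 1)) * (1 - x / (1 - y)) ^ (n + 1))
        ((y * (1 - x / (1 - y))) ^ n) x := by
      intro x _
      have h1 : HasDerivAt (fun x : ℝ => 1 - x / (1 - y)) (-(1 / (1 - y))) x :=
        ((hasDerivAt_id x).div_const (1 - y)).const_sub 1
      have h2 := (h1.pow (n + 1)).const_mul (- (y ^ n * (1 - y) / (n + 1)))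
      refine HasDerivAt.congr_deriv h2 ?_
      rw [mul_pow]
      have : (n : ℝ) + 1 ≠ 0 := by positivity
      push_cast
      generalize (1 - x / (1 - y)) ^ n = W
      field_simp
    rw [intervalIntegral.integral_eq_sub_of_hasDerivAt hder
      (Continuous.intervalIntegrable (by fun_prop) _ _)]
    rw [div_self hz.ne']
    simp
  · exact (Continuous.integrableOn_Icc (by fun_prop)).mono_set Set.Ioo_subset_Icc_self
  · refine (ae_restrict_iff' measurableSet_Ioo).2 (Filter.Eventually.of_forall fun x hx => ?_)
    have : x / (1 - y) ≤ 1 := by rw [div_le_one hz]; exact hx.2.le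
    exact pow_nonneg (mul_nonneg hy0.le (by linarith)) n

lemma outer_int (n : ℕ) :
    ∫⁻ y in Set.Ioo (0 : ℝ) 1, ENNReal.ofReal (y ^ n * (1 - y) / (n + 1)) =
      ENNReal.ofReal (1 / (((n : ℝ) + 1) ^ 2 * (n + 2))) := by
  rw [← ofReal_integral_eq_lintegral_ofReal]
  · congr 1
    rw [← integral_Ioc_eq_integral_Ioo, ← intervalIntegral.integral_of_le zero_le_one]
    have : ∀ y : ℝ, y ^ n * (1 - y) / (n + 1) = (1 / (n + 1)) * (y ^ n - y ^ (n + 1)) := by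
      intro y; ring
    simp_rw [this]
    rw [intervalIntegral.integral_const_mul, intervalIntegral.integral_sub
      (Continuous.intervalIntegrable (by fun_prop) _ _)
      (Continuous.intervalIntegrable (by fun_prop) _ _), integral_pow, integral_pow]
    have h1 : (n : ℝ) + 1 ≠ 0 := by positivity
    have h2 : (n : ℝ) + 2 ≠ 0 := by positivity
    have h3 : (n : ℝ) + 1 + 1 ≠ 0 := by positivity
    push_cast
    simp
    field_simp
    ring
  · exact (Continuous.integrableOn_Icc (by fun_prop)).mono_set Set.Ioo_subset_Icc_self
  · refine (ae_restrict_iff' measurableSet_Ioo).2 (Filter.Eventually.of_forall fun x hx => ?_)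
    have := hx.1
    have : 0 ≤ 1 - x := by linarith [hx.2]
    have := hx.1.le
    simp only [Pi.zero_apply]
    positivity

lemma full_int (n : ℕ) :
    ∫⁻ X in T0, ENNReal.ofReal (X.2 * (1 - X.1 / (1 - X.2))) ^ n =
      ENNReal.ofReal (1 / (((n : ℝ) + 1) ^ 2 * (n + 2))) := by
  rw [← lintegral_indicator T0_meas, Measure.volume_eq_prod, lintegral_prod_symm']
  swap
  · refine Measurable.indicator ?_ T0_meas
    fun_prop
  rw [← outer_int, ← lintegral_indicator measurableSet_Ioo]
  refine lintegral_congr fun y => ?_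
  by_cases hy : y ∈ Set.Ioo (0 : ℝ) 1
  · rw [Set.indicator_of_mem hy, ← inner_int hy.1 hy.2, ← lintegral_indicator measurableSet_Ioo]
    refine lintegral_congr fun x => ?_
    by_cases hx : x ∈ Set.Ioo 0 (1 - y)
    · rw [Set.indicator_of_mem hx, Set.indicator_of_mem, ENNReal.ofReal_pow]
      · have : x / (1 - y) ≤ 1 := by rw [div_le_one (by linarith [hy.2])]; exact hx.2.le
        exact mul_nonneg hy.1.le (by linarith)
      · exact ⟨hx.1, hy.1, by simp only; linarith [hx.2]⟩
    · rw [Set.indicator_of_notMem hx, Set.indicator_of_notMem]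
      rintro ⟨h1, h2, h3⟩
      exact hx ⟨h1, by simp only at h3; linarith⟩
  · rw [Set.indicator_of_notMem hy]
    convert lintegral_zero with x
    rw [Set.indicator_of_notMem]
    rintro ⟨h1, h2, h3⟩
    exact hy ⟨h2, by simp only at h1 h3; linarith⟩

def Fset (n : ℕ) : Set ((ℝ × ℝ) × (Fin n → ℝ × ℝ)) :=
  {p | p.1 ∈ T0 ∧ (fun j => psi p.1 (p.2 j)) ∈ Eset n}

lemma Fset_meas {n : ℕ} (h : MeasurableSet (Eset n)) : MeasurableSet (Fset n) := by
  refine (measurable_fst T0_meas).inter ?_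
  have : Measurable (fun (p : (ℝ × ℝ) × (Fin n → ℝ × ℝ)) j => psi p.1 (p.2 j)) := by
    refine measurable_pi_lambda _ fun j => ?_
    simp only [psi_apply]
    fun_prop
  exact this h

lemma Eset_succ (n : ℕ) : Eset (n + 1) =
    ⋃ i, MeasurableEquiv.piFinSuccAbove (fun _ => ℝ × ℝ) i ⁻¹' (Fset n) := by
  ext ω
  rw [key, Set.mem_iUnion]
  rfl

lemma Eset_meas (n : ℕ) : MeasurableSet (Eset n) := by
  induction n with
  | zero => exact (Set.toFinite _).measurableSet
  | succ n ih =>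
    rw [Eset_succ]
    exact MeasurableSet.iUnion fun i => (MeasurableEquiv.measurable _) (Fset_meas ih)

lemma Fset_vol (n : ℕ) : volume (Fset n) =
    ENNReal.ofReal (1 / (((n : ℝ) + 1) ^ 2 * (n + 2))) * volume (Eset n) := by
  rw [Measure.volume_eq_prod, Measure.prod_apply (Fset_meas (Eset_meas n)), ← full_int,
    ← lintegral_mul_const _ (by fun_prop), ← lintegral_indicator T0_meas]
  refine lintegral_congr fun X => ?_
  by_cases hX : X ∈ T0
  · rw [Set.indicator_of_mem hX, ← slice hX (Eset_meas n)]
    congr 1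
    ext Y
    exact ⟨fun h => h.2, fun h => ⟨hX, h⟩⟩
  · rw [Set.indicator_of_notMem hX]
    convert measure_empty (μ := (volume : Measure (Fin n → ℝ × ℝ)))
    ext Y
    exact ⟨fun h => hX h.1, fun h => h.elim⟩

lemma Eset_vol (n : ℕ) : volume (Eset n) =
    ENNReal.ofReal (1 / ((n.factorial : ℝ) * ((n + 1).factorial : ℝ))) := by
  induction n with
  | zero =>
    have : Eset 0 = Set.univ := by
      ext ω; simp [Eset]
    rw [this, volume_pi, Measure.pi_univ]; simp
  | succ n ih =>
    rw [Eset_succ, measure_iUnion, tsum_fintype]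
    · have : ∀ i, volume (MeasurableEquiv.piFinSuccAbove (fun _ => ℝ × ℝ) i ⁻¹' (Fset n)) =
          volume (Fset n) := fun i =>
        (volume_preserving_piFinSuccAbove (fun _ => ℝ × ℝ) i).measure_preimage
          (Fset_meas (Eset_meas n)).nullMeasurableSet
      simp only [this]
      rw [Finset.sum_const, Finset.card_univ, Fintype.card_fin, nsmul_eq_mul, Fset_vol, ih,
        ← ENNReal.ofReal_mul (by positivity), ← ENNReal.ofReal_natCast,
        ← ENNReal.ofReal_mul (by positivity)]
      congr 1
      rw [Nat.factorial_succ (n + 1), Nat.factorial_succ n]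
      have := Nat.factorial_pos n
      push_cast
      field_simp
      ring
    · intro i i' hne
      rw [Function.onFun, Set.disjoint_left]
      intro ω h h'
      exact hne (uniq ω i i' h.1 h.2 h'.1 h'.2)
    · exact fun i => (MeasurableEquiv.measurable _) (Fset_meas (Eset_meas n))

/-- `P(N_n = n) = 2^n / (n! (n+1)!)`. -/
theorem stmt16 (n : ℕ) (hn : 1 ≤ n) :
    (P n {ω | N n ω = n}).toReal
      = 2 ^ n / ((n.factorial : ℝ) * ((n + 1).factorial : ℝ)) := by
  have hpm : MeasurableSet (Set.univ.pi fun _ : Fin n => T0) :=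
    MeasurableSet.univ_pi fun _ => T0_meas
  have : {ω | N n ω = n} ∩ (Set.univ.pi fun _ : Fin n => T0) = Eset n := by
    ext ω
    constructor
    · rintro ⟨h1, h2⟩
      exact (N_iff hn ω fun j => h2 j trivial).1 h1
    · intro h
      exact ⟨(N_iff hn ω h.1).2 h, fun j _ => h.1 j⟩
  rw [P_eq, Measure.smul_apply, Measure.restrict_apply' hpm, this, Eset_vol, smul_eq_mul,
    ENNReal.toReal_mul, ENNReal.toReal_ofReal (by positivity)]
  simp [div_eq_mul_inv]

end
end

section
/- As n → ∞, E[vol(T_n)] = 1/2 − (log n)/(3n) + O(n^{−1}); that is, there exist a constant C > 0 and n₀ such that |E[vol(T_n)] − 1/2 + (log n)/(3n)| ≤ C/n for all n ≥ n₀. -/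
open MeasureTheory

noncomputable section

lemma mem_T_iff (p : ℝ × ℝ) : p ∈ T ↔ 0 ≤ p.1 ∧ 0 ≤ p.2 ∧ p.1 + p.2 ≤ 1 := by
  constructor
  · intro hp
    have hc : Convex ℝ {p : ℝ × ℝ | 0 ≤ p.1 ∧ 0 ≤ p.2 ∧ p.1 + p.2 ≤ 1} := by
      intro u hu v hv s t hs ht hst
      obtain ⟨h1, h2, h3⟩ := hu
      obtain ⟨h4, h5, h6⟩ := hv
      simp only [Set.mem_ofPred_eq, Prod.fst_add, Prod.snd_add, Prod.smul_fst, Prod.smul_snd,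
        smul_eq_mul]
      refine ⟨by positivity, by positivity, ?_⟩
      nlinarith [mul_le_mul_of_nonneg_left h3 hs, mul_le_mul_of_nonneg_left h6 ht]
    refine convexHull_min ?_ hc hp
    rintro q (rfl | rfl | rfl) <;> norm_num
  · rintro ⟨h1, h2, h3⟩
    have hc : Convex ℝ T := convex_convexHull ℝ _
    have e0 : ((0, 0) : ℝ × ℝ) ∈ T := subset_convexHull ℝ _ (by simp)
    have e1 : ((1, 0) : ℝ × ℝ) ∈ T := subset_convexHull ℝ _ (by simp)
    have e2 : ((0, 1) : ℝ × ℝ) ∈ T := subset_convexHull ℝ _ (by simp)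
    have := hc.sum_mem (t := Finset.univ) (w := ![1 - p.1 - p.2, p.1, p.2])
      (z := ![((0, 0) : ℝ × ℝ), (1, 0), (0, 1)])
      (by intro i _; fin_cases i <;> simp <;> linarith)
      (by simp [Fin.sum_univ_three]; ring)
      (by intro i _; fin_cases i <;> simp [e0, e1, e2])
    simpa [Fin.sum_univ_three] using this

lemma isOpen_T0 : IsOpen T0 := by
  have h : T0 = {p : ℝ × ℝ | 0 < p.1} ∩ ({p | 0 < p.2} ∩ {p | p.1 + p.2 < 1}) := rfl
  rw [h]
  refine (isOpen_lt (by fun_prop) (by fun_prop)).inter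
    ((isOpen_lt (by fun_prop) (by fun_prop)).inter (isOpen_lt (by fun_prop) (by fun_prop)))

lemma not_mem_chain_iff {n : ℕ} (ω : Fin n → ℝ × ℝ) {z : ℝ × ℝ} (hz : z ∈ T0) :
    z ∉ Tchain n ω ↔ ∃ k : ℝ, z.1 + k * z.2 < 1 ∧ z.1 + k * z.2 < k ∧
      ∀ i, z.1 + k * z.2 < (ω i).1 + k * (ω i).2 := by
  obtain ⟨hx, hy, hxy⟩ := hz
  constructor
  · intro h
    have hcomp : IsCompact (Tchain n ω) := by
      apply Set.Finite.isCompact_convexHull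
      exact (Set.finite_range ω).union (by simp)
    obtain ⟨f, u, h1, h2⟩ := geometric_hahn_banach_point_closed (convex_convexHull ℝ _) hcomp.isClosed h
    set α := f (1, 0) with hα
    set β := f (0, 1) with hβ
    have hf : ∀ p : ℝ × ℝ, f p = α * p.1 + β * p.2 := by
      intro p
      have : p = p.1 • ((1, 0) : ℝ × ℝ) + p.2 • ((0, 1) : ℝ × ℝ) := by ext <;> simp
      conv_lhs => rw [this]
      rw [map_add, map_smul, map_smul]; simp [hα, hβ]; ring
    have ha : f z < α := h1.trans (h2 _ (subset_convexHull ℝ _ (by simp)))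
    have hb : f z < β := h1.trans (h2 _ (subset_convexHull ℝ _ (by simp)))
    have hi : ∀ i, f z < f (ω i) := fun i => h1.trans (h2 _ (subset_convexHull ℝ _ (by simp)))
    have hs : 0 < f z := by
      by_contra hcon
      push Not at hcon
      have := hf z
      nlinarith [mul_lt_mul_of_pos_right ha hx, mul_lt_mul_of_pos_right hb hy,
        mul_nonneg (neg_nonneg.2 hcon) (sub_nonneg.2 hxy.le)]
    have hα0 : 0 < α := hs.trans ha
    have key : ∀ p : ℝ × ℝ, f p = α * (p.1 + β / α * p.2) := by
      intro p; rw [hf]; field_simp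
    refine ⟨β / α, ?_, ?_, ?_⟩
    · have := key z
      have h3 : α * (z.1 + β / α * z.2) < α * 1 := by rw [← this]; simpa using ha
      exact lt_of_mul_lt_mul_left h3 hα0.le
    · have := key z
      have h3 : α * (z.1 + β / α * z.2) < α * (β / α) := by
        rw [← this, mul_div_cancel₀ _ hα0.ne']; exact hb
      exact lt_of_mul_lt_mul_left h3 hα0.le
    · intro i
      have := hi i
      rw [key, key] at this
      exact lt_of_mul_lt_mul_left this hα0.le
  · rintro ⟨k, h1, h2, h3⟩ hmem
    have hc : Convex ℝ {p : ℝ × ℝ | z.1 + k * z.2 < p.1 + k * p.2} := by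
      apply convex_halfSpace_gt (f := fun p : ℝ × ℝ => p.1 + k * p.2)
      constructor
      · intro u v; simp; ring
      · intro c u; simp; ring
    have : z ∈ {p : ℝ × ℝ | z.1 + k * z.2 < p.1 + k * p.2} := by
      refine convexHull_min ?_ hc hmem
      rintro q (⟨i, rfl⟩ | rfl | rfl)
      · exact h3 i
      · simpa using h1
      · simpa using h2
    simp at this

/-- The missing region, jointly in the points and the location. -/
def Miss (n : ℕ) : Set ((Fin n → ℝ × ℝ) × (ℝ × ℝ)) := {u | u.2 ∈ T0 ∧ u.2 ∉ Tchain n u.1}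

lemma isOpen_Miss (n : ℕ) : IsOpen (Miss n) := by
  have h : Miss n = ⋃ k : ℝ, {u : (Fin n → ℝ × ℝ) × (ℝ × ℝ) | u.2 ∈ T0} ∩
      ({u | u.2.1 + k * u.2.2 < 1} ∩ ({u | u.2.1 + k * u.2.2 < k} ∩
      ⋂ i, {u | u.2.1 + k * u.2.2 < (u.1 i).1 + k * (u.1 i).2})) := by
    ext u
    simp only [Miss, Set.mem_ofPred_eq, Set.mem_iUnion, Set.mem_inter_iff, Set.mem_iInter]
    constructor
    · rintro ⟨h1, h2⟩
      obtain ⟨k, hk⟩ := (not_mem_chain_iff _ h1).1 h2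
      exact ⟨k, h1, hk⟩
    · rintro ⟨k, h1, hk⟩
      exact ⟨h1, (not_mem_chain_iff _ h1).2 ⟨k, hk⟩⟩
  rw [h]
  refine isOpen_iUnion fun k => ((isOpen_T0.preimage continuous_snd).inter
    ((isOpen_lt (by fun_prop) (by fun_prop)).inter
    ((isOpen_lt (by fun_prop) (by fun_prop)).inter
    (isOpen_iInter_of_finite fun i => isOpen_lt (by fun_prop) (by fun_prop)))))

lemma measurable_section_Miss (n : ℕ) (z : ℝ × ℝ) : MeasurableSet {ω | (ω, z) ∈ Miss n} :=
  ((isOpen_Miss n).preimage (by fun_prop : Continuous fun ω : Fin n → ℝ × ℝ => (ω, z))).measurableSet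


lemma vol_tri {a k : ℝ} (ha : 0 < a) (hk : 0 < k) {S : Set (ℝ × ℝ)} (hS : MeasurableSet S)
    (h1 : {p : ℝ × ℝ | 0 < p.1 ∧ 0 < p.2 ∧ p.1 + k * p.2 < a} ⊆ S)
    (h2 : S ⊆ {p : ℝ × ℝ | 0 ≤ p.1 ∧ 0 ≤ p.2 ∧ p.1 + k * p.2 ≤ a}) :
    volume S = ENNReal.ofReal (a ^ 2 / (2 * k)) := by
  rw [Measure.volume_eq_prod, Measure.prod_apply hS]
  have hae : (fun x => volume (Prod.mk x ⁻¹' S)) =ᵐ[volume]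
      (Set.Ioo 0 a).indicator (fun x => ENNReal.ofReal ((a - x) / k)) := by
    have h0 : ∀ᵐ x : ℝ, x ≠ 0 := by simp [ae_iff]
    have ha' : ∀ᵐ x : ℝ, x ≠ a := by simp [ae_iff]
    filter_upwards [h0, ha'] with x hx0 hxa
    by_cases hx : x ∈ Set.Ioo 0 a
    · rw [Set.indicator_of_mem hx]
      have hx' := hx.1
      apply le_antisymm
      · have : Prod.mk x ⁻¹' S ⊆ Set.Icc 0 ((a - x) / k) := by
          intro y hy
          obtain ⟨_, h4, h5⟩ := h2 hy
          simp only at h4 h5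
          exact ⟨h4, by rw [le_div_iff₀ hk]; linarith⟩
        refine (measure_mono this).trans ?_
        simp
      · have : Set.Ioo 0 ((a - x) / k) ⊆ Prod.mk x ⁻¹' S := by
          intro y hy
          refine h1 ⟨hx.1, hy.1, ?_⟩
          have := hy.2
          rw [lt_div_iff₀ hk] at this
          simp only; linarith
        refine le_trans ?_ (measure_mono this)
        simp
    · rw [Set.indicator_of_notMem hx]
      have : Prod.mk x ⁻¹' S = ∅ := by
        rw [Set.eq_empty_iff_forall_notMem]
        intro y hy
        obtain ⟨h3, h4, h5⟩ := h2 hy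
        simp only at h3 h4 h5
        have h6 : 0 ≤ k * y := by positivity
        exact hx ⟨lt_of_le_of_ne h3 hx0.symm, lt_of_le_of_ne (by linarith) hxa⟩
      simp [this]
  rw [lintegral_congr_ae hae, lintegral_indicator measurableSet_Ioo,
    ← ofReal_integral_eq_lintegral_ofReal]
  · congr 1
    rw [← integral_Ioc_eq_integral_Ioo, ← intervalIntegral.integral_of_le ha.le,
      intervalIntegral.integral_div, intervalIntegral.integral_sub (by simp) (by simp)]
    simp
    field_simp
    ring
  · apply IntegrableOn.mono_set (t := Set.Icc 0 a) _ Set.Ioo_subset_Icc_self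
    apply ContinuousOn.integrableOn_Icc
    fun_prop
  · filter_upwards [ae_restrict_mem measurableSet_Ioo] with x hx
    have := hx.2
    exact div_nonneg (by linarith) hk.le

lemma measurableSet_T : MeasurableSet T := by
  have : T = {p : ℝ × ℝ | 0 ≤ p.1 ∧ 0 ≤ p.2 ∧ p.1 + p.2 ≤ 1} := by ext p; exact mem_T_iff p
  rw [this]
  have h : {p : ℝ × ℝ | 0 ≤ p.1 ∧ 0 ≤ p.2 ∧ p.1 + p.2 ≤ 1} =
    {p : ℝ × ℝ | 0 ≤ p.1} ∩ ({p | 0 ≤ p.2} ∩ {p | p.1 + p.2 ≤ 1}) := rfl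
  rw [h]
  exact (measurableSet_le (by fun_prop) (by fun_prop)).inter
    ((measurableSet_le (by fun_prop) (by fun_prop)).inter
      (measurableSet_le (by fun_prop) (by fun_prop)))

lemma vol_T : volume T = ENNReal.ofReal (1 / 2) := by
  rw [vol_tri one_pos one_pos measurableSet_T]
  · norm_num
  · rintro p ⟨h1, h2, h3⟩; rw [mem_T_iff]; exact ⟨h1.le, h2.le, by linarith⟩
  · intro p hp; rw [mem_T_iff] at hp; simpa using hp

lemma vol_T0 : volume T0 = ENNReal.ofReal (1 / 2) := by
  rw [vol_tri one_pos one_pos isOpen_T0.measurableSet]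
  · norm_num
  · rintro p ⟨h1, h2, h3⟩; exact ⟨h1, h2, by linarith⟩
  · rintro p ⟨h1, h2, h3⟩; exact ⟨h1.le, h2.le, by linarith⟩

instance : IsProbabilityMeasure μT := by
  constructor
  rw [μT, Measure.smul_apply, Measure.restrict_apply_univ, vol_T, smul_eq_mul]
  rw [← ENNReal.ofReal_ofNat, ← ENNReal.ofReal_mul (by norm_num)]
  norm_num

instance (n : ℕ) : IsProbabilityMeasure (P n) := by
  unfold P; infer_instance

lemma μT_half {a k : ℝ} (ha : 0 < a) (hk : 0 < k) (ha1 : a ≤ 1) (hak : a ≤ k) {S : Set (ℝ × ℝ)}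
    (hS : MeasurableSet S) (h1 : {p : ℝ × ℝ | p.1 + k * p.2 < a} ⊆ S)
    (h2 : S ⊆ {p : ℝ × ℝ | p.1 + k * p.2 ≤ a}) :
    μT Sᶜ = ENNReal.ofReal (1 - a ^ 2 / k) := by
  rw [prob_compl_eq_one_sub hS, μT, Measure.smul_apply, Measure.restrict_apply hS,
    vol_tri ha hk (hS.inter measurableSet_T), smul_eq_mul, ← ENNReal.ofReal_ofNat,
    ← ENNReal.ofReal_mul (by norm_num), ENNReal.ofReal_sub _ (by positivity), ENNReal.ofReal_one]
  · congr 2; field_simp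
  · rintro p ⟨h3, h4, h5⟩
    refine ⟨h1 h5, ?_⟩
    rw [mem_T_iff]
    refine ⟨h3.le, h4.le, ?_⟩
    by_contra hcon
    push Not at hcon
    rcases le_total k 1 with hk1 | hk1
    · nlinarith [mul_nonneg h3.le (sub_nonneg.2 hk1)]
    · nlinarith [mul_nonneg h4.le (sub_nonneg.2 hk1)]
  · rintro p ⟨h3, h4⟩
    rw [mem_T_iff] at h4
    exact ⟨h4.1, h4.2.1, h2 h3⟩

lemma μT_gt {a k : ℝ} (ha : 0 < a) (hk : 0 < k) (ha1 : a ≤ 1) (hak : a ≤ k) :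
    μT {p : ℝ × ℝ | a < p.1 + k * p.2} = ENNReal.ofReal (1 - a ^ 2 / k) := by
  have := μT_half ha hk ha1 hak (S := {p : ℝ × ℝ | p.1 + k * p.2 ≤ a})
    (measurableSet_le (by fun_prop) (by fun_prop)) (fun p hp => by simp only [Set.mem_ofPred_eq] at hp ⊢; exact hp.le) subset_rfl
  rw [← this]; congr 1; ext p; simp

lemma μT_ge {a k : ℝ} (ha : 0 < a) (hk : 0 < k) (ha1 : a ≤ 1) (hak : a ≤ k) :
    μT {p : ℝ × ℝ | a ≤ p.1 + k * p.2} = ENNReal.ofReal (1 - a ^ 2 / k) := by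
  have := μT_half ha hk ha1 hak (S := {p : ℝ × ℝ | p.1 + k * p.2 < a})
    (measurableSet_lt (by fun_prop) (by fun_prop)) subset_rfl (fun p hp => by simp only [Set.mem_ofPred_eq] at hp ⊢; exact hp.le)
  rw [← this]; congr 1; ext p; simp


lemma P_all (n : ℕ) (S : Set (ℝ × ℝ)) : P n {ω | ∀ j, ω j ∈ S} = μT S ^ n := by
  have : {ω : Fin n → ℝ × ℝ | ∀ j, ω j ∈ S} = Set.pi Set.univ (fun _ => S) := by
    ext ω; simp
  rw [this, P, Measure.pi_pi]; simp

lemma P_split (m : ℕ) (i : Fin (m + 1)) {U : Set (ℝ × ℝ)} (hU : MeasurableSet U)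
    {R : Set ((ℝ × ℝ) × (ℝ × ℝ))} (hR : MeasurableSet R) :
    P (m + 1) {ω | ω i ∈ U ∧ ∀ j, j ≠ i → (ω i, ω j) ∈ R} =
      ∫⁻ w in U, (μT {p | (w, p) ∈ R}) ^ m ∂μT := by
  set S' : Set ((ℝ × ℝ) × (Fin m → ℝ × ℝ)) := {u | u.1 ∈ U ∧ ∀ j, (u.1, u.2 j) ∈ R} with hS'
  have hSm : MeasurableSet S' := by
    have : S' = (Prod.fst ⁻¹' U) ∩ ⋂ j, (fun u : (ℝ × ℝ) × (Fin m → ℝ × ℝ) => (u.1, u.2 j)) ⁻¹' R := by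
      ext u; simp [hS']
    rw [this]
    exact (measurable_fst hU).inter (MeasurableSet.iInter fun j =>
      (by fun_prop : Measurable fun u : (ℝ × ℝ) × (Fin m → ℝ × ℝ) => (u.1, u.2 j)) hR)
  have hmp := measurePreserving_piFinSuccAbove (fun _ : Fin (m + 1) => μT) i
  have hpre : {ω : Fin (m + 1) → ℝ × ℝ | ω i ∈ U ∧ ∀ j, j ≠ i → (ω i, ω j) ∈ R} =
      (MeasurableEquiv.piFinSuccAbove (fun _ => ℝ × ℝ) i) ⁻¹' S' := by
    ext ω
    simp only [hS', Set.mem_ofPred_eq, Set.mem_preimage, MeasurableEquiv.piFinSuccAbove_apply,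
      Fin.insertNthEquiv_symm_apply, Fin.removeNth]
    refine and_congr_right fun _ => ⟨fun h j => h _ (Fin.succAbove_ne i j), fun h j hj => ?_⟩
    obtain ⟨j', rfl⟩ := Fin.exists_succAbove_eq hj
    exact h j'
  rw [hpre, P, hmp.measure_preimage hSm.nullMeasurableSet, Measure.prod_apply hSm,
    ← lintegral_indicator hU]
  congr 1
  ext w
  by_cases hw : w ∈ U
  · rw [Set.indicator_of_mem hw]
    have : Prod.mk w ⁻¹' S' = {ω | ∀ j, ω j ∈ {p | (w, p) ∈ R}} := by
      ext ω; simp [hS', hw]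
    rw [this]
    exact P_all m _
  · rw [Set.indicator_of_notMem hw]
    have : Prod.mk w ⁻¹' S' = ∅ := by
      ext ω; simp [hS', hw]
    rw [this]; simp

/-- The parameter of the line through `z` and `w`. -/
def kap (z w : ℝ × ℝ) : ℝ := (w.1 - z.1) / (z.2 - w.2)

/-- Admissible tangent points seen from `z`. -/
def Uz (z : ℝ × ℝ) : Set (ℝ × ℝ) :=
  {w | w.2 < z.2 ∧ z.1 + kap z w * z.2 < 1 ∧ z.1 + kap z w * z.2 < kap z w}

lemma measurable_kap : Measurable fun u : (ℝ × ℝ) × (ℝ × ℝ) => kap u.1 u.2 := by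
  unfold kap; fun_prop

lemma measurable_kap' (z : ℝ × ℝ) : Measurable (kap z) := by
  unfold kap; fun_prop

lemma measurableSet_Uz (z : ℝ × ℝ) : MeasurableSet (Uz z) := by
  have := measurable_kap' z
  have h : Uz z = {w | w.2 < z.2} ∩ ({w | z.1 + kap z w * z.2 < 1} ∩
    {w | z.1 + kap z w * z.2 < kap z w}) := rfl
  rw [h]
  exact (measurableSet_lt (by fun_prop) (by fun_prop)).inter
    ((measurableSet_lt (by fun_prop) (by fun_prop)).inter
      (measurableSet_lt (by fun_prop) (by fun_prop)))

lemma kap_pos {z w : ℝ × ℝ} (hz : z ∈ T0) (hw : w ∈ Uz z) : 0 < kap z w := by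
  obtain ⟨h1, h2, h3⟩ := hz
  obtain ⟨h4, h5, h6⟩ := hw
  by_contra hcon
  push Not at hcon
  nlinarith [mul_nonneg (neg_nonneg.2 hcon) (by linarith : 0 ≤ 1 - z.2)]

/-- The strict line inequality for a point below `z`. -/
lemma lt_kap_iff {z w : ℝ × ℝ} (h : w.2 < z.2) (k : ℝ) :
    z.1 + k * z.2 < w.1 + k * w.2 ↔ k < kap z w := by
  rw [kap, lt_div_iff₀ (by linarith)]
  constructor <;> intro h <;> nlinarith

lemma le_kap_iff {z w : ℝ × ℝ} (h : w.2 < z.2) (k : ℝ) :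
    z.1 + k * z.2 ≤ w.1 + k * w.2 ↔ k ≤ kap z w := by
  rw [kap, le_div_iff₀ (by linarith)]
  constructor <;> intro h <;> nlinarith

/-- slope to the corner `(1,0)`. -/
def kc (z : ℝ × ℝ) : ℝ := (1 - z.1) / z.2

/-- Value of the probability that `z` is missed. -/
def pz (m : ℕ) (z : ℝ × ℝ) : ENNReal :=
  ENNReal.ofReal (1 - z.2 / (1 - z.1)) ^ (m + 1) +
    (m + 1 : ℕ) * ∫⁻ w in Uz z, ENNReal.ofReal (1 - (z.1 + kap z w * z.2) ^ 2 / kap z w) ^ m ∂μT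

lemma kc_facts {z : ℝ × ℝ} (hz : z ∈ T0) : 0 < kc z ∧ z.1 + kc z * z.2 = 1 ∧ 1 < kc z ∧
    1 ^ 2 / kc z = z.2 / (1 - z.1) := by
  obtain ⟨h1, h2, h3⟩ := hz
  refine ⟨div_pos (by linarith) h2, ?_, ?_, ?_⟩
  · unfold kc; field_simp; ring
  · unfold kc; rw [lt_div_iff₀ h2]; linarith
  · unfold kc; rw [one_pow, one_div_div]

lemma prob_ge (m : ℕ) {z : ℝ × ℝ} (hz : z ∈ T0) :
    pz m z ≤ P (m + 1) {ω | z ∉ Tchain (m + 1) ω} := by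
  have hz' := hz
  obtain ⟨h1, h2, h3⟩ := hz
  obtain ⟨hk0, hk1, hk2, hk3⟩ := kc_facts hz'
  set S : Set (ℝ × ℝ) := {p | 1 < p.1 + kc z * p.2} with hS
  have hSm : MeasurableSet S := measurableSet_lt (by fun_prop) (by fun_prop)
  set R : Set ((ℝ × ℝ) × (ℝ × ℝ)) :=
    {u | z.1 + kap z u.1 * z.2 < u.2.1 + kap z u.1 * u.2.2} with hR
  have hkm := measurable_kap' z
  have hRm : MeasurableSet R := measurableSet_lt (by fun_prop) (by fun_prop)
  set Ec : Set (Fin (m + 1) → ℝ × ℝ) := {ω | ∀ j, ω j ∈ S} with hEc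
  set E : Fin (m + 1) → Set (Fin (m + 1) → ℝ × ℝ) :=
    fun i => {ω | ω i ∈ Uz z ∧ ∀ j, j ≠ i → (ω i, ω j) ∈ R} with hE
  have hEm : ∀ i, MeasurableSet (E i) := by
    intro i
    have : E i = (fun ω => ω i) ⁻¹' Uz z ∩ ⋂ j, ⋂ (_ : j ≠ i), (fun ω => (ω i, ω j)) ⁻¹' R := by
      ext ω; simp [hE]
    rw [this]
    exact ((measurable_pi_apply i) (measurableSet_Uz z)).inter
      (MeasurableSet.iInter fun j => MeasurableSet.iInter fun _ =>
        (by fun_prop : Measurable fun ω : Fin (m + 1) → ℝ × ℝ => (ω i, ω j)) hRm)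
  have hdisj : Pairwise (Function.onFun Disjoint E) := by
    intro i j hij
    rw [Function.onFun, Set.disjoint_left]
    rintro ω ⟨a1, a2⟩ ⟨b1, b2⟩
    have c1 := (lt_kap_iff b1.1 _).1 (a2 j hij.symm)
    have c2 := (lt_kap_iff a1.1 _).1 (b2 i hij)
    exact lt_asymm c1 c2
  have hdisj2 : Disjoint Ec (⋃ i, E i) := by
    rw [Set.disjoint_left]
    intro ω hω hω2
    obtain ⟨i, a1, a2⟩ := Set.mem_iUnion.1 hω2
    have hb : 1 < (ω i).1 + kc z * (ω i).2 := hω i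
    have c1 := (lt_kap_iff a1.1 (kc z)).1 (by rw [hk1]; exact hb)
    have c2 := a1.2.1
    nlinarith
  have hsub : Ec ∪ ⋃ i, E i ⊆ {ω | z ∉ Tchain (m + 1) ω} := by
    intro ω hω
    show z ∉ Tchain (m + 1) ω
    rw [not_mem_chain_iff ω hz']
    rcases hω with hω | hω
    · -- move the slope slightly below the corner slope
      have hev : ∀ᶠ k in nhdsWithin (kc z) (Set.Iio (kc z)), z.1 + k * z.2 < k ∧
          ∀ i, z.1 + k * z.2 < (ω i).1 + k * (ω i).2 := by
        apply Filter.Eventually.filter_mono nhdsWithin_le_nhds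
        apply Filter.Eventually.and
        · exact (by fun_prop : Continuous fun k : ℝ => z.1 + k * z.2).continuousAt.eventually_lt
            continuous_id.continuousAt (by rw [hk1]; exact hk2)
        · rw [Filter.eventually_all]
          intro i
          refine (by fun_prop : Continuous fun k : ℝ => z.1 + k * z.2).continuousAt.eventually_lt
            (by fun_prop : Continuous fun k : ℝ => (ω i).1 + k * (ω i).2).continuousAt ?_
          rw [hk1]; exact hω i
      obtain ⟨k, hk, hk'⟩ := (hev.and self_mem_nhdsWithin).exists
      have hk'' : k < kc z := hk'
      exact ⟨k, by nlinarith, hk.1, hk.2⟩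
    · obtain ⟨i, a1, a2⟩ := Set.mem_iUnion.1 hω
      have hev : ∀ᶠ k in nhdsWithin (kap z (ω i)) (Set.Iio (kap z (ω i))), z.1 + k * z.2 < k ∧
          z.1 + k * z.2 < 1 ∧
          ∀ j, j ≠ i → z.1 + k * z.2 < (ω j).1 + k * (ω j).2 := by
        apply Filter.Eventually.filter_mono nhdsWithin_le_nhds
        refine Filter.Eventually.and ?_ (Filter.Eventually.and ?_ ?_)
        · exact (by fun_prop : Continuous fun k : ℝ => z.1 + k * z.2).continuousAt.eventually_lt
            continuous_id.continuousAt a1.2.2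
        · exact (by fun_prop : Continuous fun k : ℝ => z.1 + k * z.2).continuousAt.eventually_lt
            continuousAt_const a1.2.1
        · rw [Filter.eventually_all]
          intro j
          by_cases hj : j = i
          · simp [hj]
          · simp only [hj, ne_eq, not_false_eq_true, true_implies]
            exact (by fun_prop : Continuous fun k : ℝ => z.1 + k * z.2).continuousAt.eventually_lt
              (by fun_prop : Continuous fun k : ℝ => (ω j).1 + k * (ω j).2).continuousAt (a2 j hj)
      obtain ⟨k, hk, hk'⟩ := (hev.and self_mem_nhdsWithin).exists
      refine ⟨k, hk.2.1, hk.1, fun j => ?_⟩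
      by_cases hj : j = i
      · rw [hj, lt_kap_iff a1.1]; exact hk'
      · exact hk.2.2 j hj
  refine le_trans (le_of_eq ?_) (measure_mono hsub)
  rw [measure_union hdisj2 (MeasurableSet.iUnion hEm), measure_iUnion hdisj hEm, tsum_fintype,
    pz, hEc, P_all, hS, μT_gt one_pos hk0 le_rfl hk2.le, hk3]
  congr 1
  simp only [hE]
  rw [Finset.sum_congr rfl (fun i _ => P_split m i (measurableSet_Uz z) hRm)]
  rw [Finset.sum_const, Finset.card_univ, Fintype.card_fin, nsmul_eq_mul]
  congr 1
  refine setLIntegral_congr_fun (measurableSet_Uz z) fun w hw => ?_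
  have hw' := hw
  obtain ⟨_, b2, b3⟩ := hw
  have b4 := kap_pos hz' hw'
  have := μT_gt (a := z.1 + kap z w * z.2) (k := kap z w) (by positivity) b4 b2.le b3.le
  simp only [hR, Set.mem_ofPred_eq, this]

lemma prob_le (m : ℕ) {z : ℝ × ℝ} (hz : z ∈ T0) :
    P (m + 1) {ω | z ∉ Tchain (m + 1) ω} ≤ pz m z := by
  have hz' := hz
  obtain ⟨h1, h2, h3⟩ := hz
  obtain ⟨hk0, hk1, hk2, hk3⟩ := kc_facts hz'
  set S : Set (ℝ × ℝ) := {p | 1 ≤ p.1 + kc z * p.2} with hS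
  set R : Set ((ℝ × ℝ) × (ℝ × ℝ)) :=
    {u | z.1 + kap z u.1 * z.2 ≤ u.2.1 + kap z u.1 * u.2.2} with hR
  have hkm := measurable_kap' z
  have hRm : MeasurableSet R := measurableSet_le (by fun_prop) (by fun_prop)
  set Ec : Set (Fin (m + 1) → ℝ × ℝ) := {ω | ∀ j, ω j ∈ S} with hEc
  set E : Fin (m + 1) → Set (Fin (m + 1) → ℝ × ℝ) :=
    fun i => {ω | ω i ∈ Uz z ∧ ∀ j, j ≠ i → (ω i, ω j) ∈ R} with hE
  have hsub : {ω | z ∉ Tchain (m + 1) ω} ⊆ Ec ∪ ⋃ i, E i := by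
    intro ω hω
    have hω' : z ∉ Tchain (m + 1) ω := hω
    rw [not_mem_chain_iff ω hz'] at hω'
    obtain ⟨k, b1, b2, b3⟩ := hω'
    have hkkc : k < kc z := by nlinarith
    -- points weakly above z satisfy the constraint for all larger slopes
    have habove : ∀ j, z.2 ≤ (ω j).2 → ∀ k', k ≤ k' →
        z.1 + k' * z.2 ≤ (ω j).1 + k' * (ω j).2 := by
      intro j hj k' hk'
      have := b3 j
      nlinarith [mul_nonneg (sub_nonneg.2 hk') (sub_nonneg.2 hj)]
    by_cases hall : ∀ i, (ω i).2 < z.2 → kc z ≤ kap z (ω i)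
    · left
      intro j
      show 1 ≤ (ω j).1 + kc z * (ω j).2
      rw [← hk1]
      rcases lt_or_ge (ω j).2 z.2 with hj | hj
      · rw [le_kap_iff hj]; exact hall j hj
      · exact habove j hj _ hkkc.le
    · right
      push Not at hall
      obtain ⟨i0, hi0, hi0'⟩ := hall
      obtain ⟨i, hi, hmin⟩ := Finset.exists_min_image
        (Finset.univ.filter fun i => (ω i).2 < z.2) (fun i => kap z (ω i)) ⟨i0, by simp [hi0]⟩
      simp only [Finset.mem_filter, Finset.mem_univ, true_and] at hi hmin
      have hki : k < kap z (ω i) := (lt_kap_iff hi k).1 (b3 i)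
      have hic : kap z (ω i) < kc z := (hmin i0 hi0).trans_lt hi0'
      refine Set.mem_iUnion.2 ⟨i, ⟨hi, ?_, ?_⟩, ?_⟩
      · nlinarith
      · nlinarith
      · intro j _
        show z.1 + kap z (ω i) * z.2 ≤ (ω j).1 + kap z (ω i) * (ω j).2
        rcases lt_or_ge (ω j).2 z.2 with hj | hj
        · rw [le_kap_iff hj]; exact hmin j hj
        · exact habove j hj _ hki.le
  refine (measure_mono hsub).trans ((measure_union_le _ _).trans ?_)
  refine (add_le_add le_rfl (measure_iUnion_fintype_le _ _)).trans (le_of_eq ?_)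
  rw [pz, hEc, P_all, hS, μT_ge one_pos hk0 le_rfl hk2.le, hk3]
  congr 1
  simp only [hE]
  rw [Finset.sum_congr rfl (fun i _ => P_split m i (measurableSet_Uz z) hRm)]
  rw [Finset.sum_const, Finset.card_univ, Fintype.card_fin, nsmul_eq_mul]
  congr 1
  refine setLIntegral_congr_fun (measurableSet_Uz z) fun w hw => ?_
  have hw' := hw
  obtain ⟨_, c2, c3⟩ := hw
  have c4 := kap_pos hz' hw'
  have := μT_ge (a := z.1 + kap z w * z.2) (k := kap z w) (by positivity) c4 c2.le c3.le
  simp only [hR, Set.mem_ofPred_eq, this]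

lemma prob_eq (m : ℕ) {z : ℝ × ℝ} (hz : z ∈ T0) :
    P (m + 1) {ω | z ∉ Tchain (m + 1) ω} = pz m z :=
  le_antisymm (prob_le m hz) (prob_ge m hz)


lemma lint_Ioo {a b : ℝ} (hab : a ≤ b) {g : ℝ → ℝ} (hg : ContinuousOn g (Set.Icc a b))
    (h0 : ∀ x ∈ Set.Ioo a b, 0 ≤ g x) :
    ∫⁻ x in Set.Ioo a b, ENNReal.ofReal (g x) = ENNReal.ofReal (∫ x in a..b, g x) := by
  rw [intervalIntegral.integral_of_le hab, integral_Ioc_eq_integral_Ioo,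
    ofReal_integral_eq_lintegral_ofReal]
  · exact (hg.integrableOn_Icc).mono_set Set.Ioo_subset_Icc_self
  · filter_upwards [ae_restrict_mem measurableSet_Ioo] with x hx using h0 x hx

/-- Admissible slopes at `z`. -/
def Iz (z : ℝ × ℝ) : Set ℝ := {k | z.1 + k * z.2 < 1 ∧ z.1 + k * z.2 < k}

lemma measurableSet_Iz (z : ℝ × ℝ) : MeasurableSet (Iz z) := by
  have h : Iz z = {k | z.1 + k * z.2 < 1} ∩ {k | z.1 + k * z.2 < k} := rfl
  rw [h]
  exact (measurableSet_lt (by fun_prop) (by fun_prop)).inter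
      (measurableSet_lt (by fun_prop) (by fun_prop))

lemma Iz_pos {z : ℝ × ℝ} (hz : z ∈ T0) {k : ℝ} (hk : k ∈ Iz z) : 0 < k := by
  obtain ⟨h1, h2, h3⟩ := hz
  obtain ⟨h5, h6⟩ := hk
  by_contra hcon
  push Not at hcon
  nlinarith [mul_nonneg (neg_nonneg.2 hcon) (by linarith : 0 ≤ 1 - z.2)]

lemma inner_eq {z : ℝ × ℝ} (hz : z ∈ T0) {f : ℝ → ENNReal} (hf : Measurable f) :
    ∫⁻ w in Uz z, f (kap z w) ∂μT = ENNReal.ofReal (z.2 ^ 2) * ∫⁻ k in Iz z, f k := by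
  have hz' := hz
  obtain ⟨h1, h2, h3⟩ := hz
  have hUT : MeasurableSet (Uz z ∩ T) := (measurableSet_Uz z).inter measurableSet_T
  rw [μT, Measure.restrict_smul, lintegral_smul_measure, Measure.restrict_restrict
    (measurableSet_Uz z), ← lintegral_indicator hUT, Measure.volume_eq_prod, lintegral_prod_symm']
  swap
  · exact (hf.comp (measurable_kap' z)).indicator hUT
  have key : ∀ t : ℝ, ∫⁻ x, (Uz z ∩ T).indicator (fun w => f (kap z w)) (x, t) =
      (Set.Ico 0 z.2).indicator (fun t => ENNReal.ofReal (z.2 - t) * ∫⁻ k in Iz z, f k) t := by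
    intro t
    by_cases ht : t ∈ Set.Ico 0 z.2
    · rw [Set.indicator_of_mem ht]
      have hh : 0 < z.2 - t := sub_pos.2 ht.2
      have himg : {x : ℝ | (x, t) ∈ Uz z ∩ T} = (fun k => z.1 + k * (z.2 - t)) '' Iz z := by
        ext x
        simp only [Set.mem_ofPred_eq, Set.mem_image]
        constructor
        · rintro ⟨⟨a1, a2, a3⟩, a4⟩
          refine ⟨kap z (x, t), ⟨a2, a3⟩, ?_⟩
          unfold kap; field_simp; ring
        · rintro ⟨k, hk, rfl⟩
          have hk0 := Iz_pos hz' hk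
          have hkap : kap z (z.1 + k * (z.2 - t), t) = k := by
            unfold kap; field_simp; ring
          refine ⟨⟨ht.2, ?_, ?_⟩, ?_⟩
          · rw [hkap]; exact hk.1
          · rw [hkap]; exact hk.2
          · rw [mem_T_iff]
            refine ⟨by positivity, ht.1, ?_⟩
            have := hk.1
            have ht1 := ht.1
            simp only
            -- affine in t
            by_contra hcon
            push Not at hcon
            rcases le_total k 1 with hk1 | hk1
            · nlinarith [mul_nonneg hh.le (sub_nonneg.2 hk1)]
            · nlinarith [mul_nonneg ht1 (sub_nonneg.2 hk1)]
      have hm : MeasurableSet {x : ℝ | (x, t) ∈ Uz z ∩ T} :=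
        (by fun_prop : Measurable fun x : ℝ => (x, t)) hUT
      have e1 : ∀ x, (Uz z ∩ T).indicator (fun w => f (kap z w)) (x, t) =
          {x : ℝ | (x, t) ∈ Uz z ∩ T}.indicator (fun x => f (kap z (x, t))) x := by
        intro x; simp only [Set.indicator, Set.mem_ofPred_eq]
      rw [lintegral_congr e1, lintegral_indicator hm, himg,
        lintegral_image_eq_lintegral_abs_deriv_mul (f' := fun _ => z.2 - t) (measurableSet_Iz z)]
      · rw [abs_of_pos hh, ← lintegral_const_mul _ hf]
        congr 1; ext k
        congr 2
        unfold kap; field_simp; ring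
      · intro k _
        apply HasDerivAt.hasDerivWithinAt
        simpa using ((hasDerivAt_id k).mul_const (z.2 - t)).const_add z.1
      · intro k _ k' _ hkk
        simp only at hkk
        have : k * (z.2 - t) = k' * (z.2 - t) := by linarith
        exact mul_right_cancel₀ hh.ne' this
    · rw [Set.indicator_of_notMem ht]
      have : ∀ x, (Uz z ∩ T).indicator (fun w => f (kap z w)) (x, t) = 0 := by
        intro x
        apply Set.indicator_of_notMem
        rintro ⟨a1, a2⟩
        rw [mem_T_iff] at a2
        exact ht ⟨a2.2.1, a1.1⟩
      simp [this]
  rw [lintegral_congr key, lintegral_indicator measurableSet_Ico,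
    lintegral_mul_const _ (by fun_prop), ← setLIntegral_congr Ioo_ae_eq_Ico,
    lint_Ioo h2.le (by fun_prop) (fun x hx => by have := hx.2; linarith), smul_eq_mul, ← mul_assoc,
    ← ENNReal.ofReal_ofNat, ← ENNReal.ofReal_mul (by norm_num)]
  congr 2
  rw [intervalIntegral.integral_sub (by simp) (by simp)]
  simp
  ring

/-- The integrand. -/
def Fm (m : ℕ) (a k : ℝ) : ENNReal := ENNReal.ofReal (1 - a ^ 2 / k) ^ m

lemma measurable_Fm (m : ℕ) : Measurable fun u : ℝ × ℝ => Fm m u.1 u.2 := by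
  unfold Fm; fun_prop

/-- region in variables `(a, y, k)`. -/
def Reg : Set (ℝ × ℝ × ℝ) :=
  {u | 0 < u.2.1 ∧ 0 < u.2.2 ∧ u.2.2 * u.2.1 < u.1 ∧ u.1 < 1 ∧ u.1 < u.2.2}

lemma measurableSet_Reg : MeasurableSet Reg := by
  have h : Reg = {u : ℝ × ℝ × ℝ | 0 < u.2.1} ∩ ({u | 0 < u.2.2} ∩ ({u | u.2.2 * u.2.1 < u.1} ∩
    ({u | u.1 < 1} ∩ {u | u.1 < u.2.2}))) := rfl
  rw [h]
  refine (measurableSet_lt (by fun_prop) (by fun_prop)).inter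
    ((measurableSet_lt (by fun_prop) (by fun_prop)).inter
    ((measurableSet_lt (by fun_prop) (by fun_prop)).inter
    ((measurableSet_lt (by fun_prop) (by fun_prop)).inter
      (measurableSet_lt (by fun_prop) (by fun_prop)))))

/-- the full integrand in variables `(a, y, k)`. -/
def Gm (m : ℕ) : ℝ × ℝ × ℝ → ENNReal :=
  Reg.indicator fun u => ENNReal.ofReal (u.2.1 ^ 2) * Fm m u.1 u.2.2

lemma measurable_Gm (m : ℕ) : Measurable (Gm m) := by
  refine Measurable.indicator ?_ measurableSet_Reg
  have := (measurable_Fm m).comp (by fun_prop : Measurable fun u : ℝ × ℝ × ℝ => (u.1, u.2.2))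
  exact (by fun_prop : Measurable fun u : ℝ × ℝ × ℝ => ENNReal.ofReal (u.2.1 ^ 2)).mul this

lemma outer_eq (m : ℕ) :
    ∫⁻ z in T0, (∫⁻ w in Uz z, Fm m (z.1 + kap z w * z.2) (kap z w) ∂μT) =
      ∫⁻ a, ∫⁻ k, ∫⁻ y, Gm m (a, y, k) := by
  have hG := measurable_Gm m
  have hGx : Measurable fun u : ℝ × ℝ × ℝ => Gm m (u.1 + u.2.2 * u.2.1, u.2.1, u.2.2) :=
    hG.comp (by fun_prop : Measurable fun u : ℝ × ℝ × ℝ =>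
      ((u.1 + u.2.2 * u.2.1, u.2.1, u.2.2) : ℝ × ℝ × ℝ))
  have e1 : ∫⁻ z in T0, (∫⁻ w in Uz z, Fm m (z.1 + kap z w * z.2) (kap z w) ∂μT) =
      ∫⁻ z : ℝ × ℝ, ∫⁻ k, Gm m (z.1 + k * z.2, z.2, k) := by
    rw [← lintegral_indicator isOpen_T0.measurableSet]
    congr 1; ext z
    by_cases hz : z ∈ T0
    · have hfm : Measurable fun k => Fm m (z.1 + k * z.2) k :=
        by unfold Fm; fun_prop
      have hi := inner_eq hz hfm
      rw [← lintegral_const_mul _ hfm, ← lintegral_indicator (measurableSet_Iz z)] at hi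
      refine (Set.indicator_of_mem hz _).trans (hi.trans ?_)
      congr 1; ext k
      by_cases hk : k ∈ Iz z
      · rw [Set.indicator_of_mem hk, Gm, Set.indicator_of_mem]
        exact ⟨hz.2.1, Iz_pos hz hk, by simp only; linarith [hz.1], hk.1, hk.2⟩
      · rw [Set.indicator_of_notMem hk, Gm, Set.indicator_of_notMem]
        rintro ⟨_, _, _, h4, h5⟩
        exact hk ⟨h4, h5⟩
    · rw [Set.indicator_of_notMem hz]
      have : ∀ k, Gm m (z.1 + k * z.2, z.2, k) = 0 := by
        intro k
        rw [Gm, Set.indicator_of_notMem]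
        rintro ⟨h1, h2, h3, h4, h5⟩
        simp only at h1 h2 h3 h4 h5
        have hx : 0 < z.1 := by linarith
        refine hz ⟨hx, h1, ?_⟩
        set s := z.1 + k * z.2 with hs
        have hs0 : 0 < s := by positivity
        by_contra hcon
        push Not at hcon
        nlinarith [mul_lt_mul_of_pos_right h4 hx, mul_lt_mul_of_pos_right h5 h1]
      simp [this]
  rw [e1, Measure.volume_eq_prod, lintegral_prod_symm']
  swap
  · exact (hGx.comp (by fun_prop : Measurable fun u : (ℝ × ℝ) × ℝ =>
      ((u.1.1, u.1.2, u.2) : ℝ × ℝ × ℝ))).lintegral_prod_right'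
  simp only
  -- now ∫ y, ∫ x, ∫ k
  have e2 : ∀ y : ℝ, ∫⁻ x, ∫⁻ k, Gm m (x + k * y, y, k) = ∫⁻ a, ∫⁻ k, Gm m (a, y, k) := by
    intro y
    rw [lintegral_lintegral_swap, lintegral_lintegral_swap (f := fun a k => Gm m (a, y, k))]
    · congr 1; ext k
      exact lintegral_add_right_eq_self (fun a => Gm m (a, y, k)) (k * y)
    · exact (hG.comp (by fun_prop : Measurable fun u : ℝ × ℝ =>
        ((u.1, y, u.2) : ℝ × ℝ × ℝ))).aemeasurable
    · exact (hGx.comp (by fun_prop : Measurable fun u : ℝ × ℝ =>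
        ((u.1, y, u.2) : ℝ × ℝ × ℝ))).aemeasurable
  rw [lintegral_congr e2, lintegral_lintegral_swap]
  · congr 1; ext a
    rw [lintegral_lintegral_swap]
    exact (hG.comp (by fun_prop : Measurable fun u : ℝ × ℝ =>
        ((a, u.1, u.2) : ℝ × ℝ × ℝ))).aemeasurable
  · exact ((hG.comp (by fun_prop : Measurable fun u : (ℝ × ℝ) × ℝ =>
      ((u.1.2, u.1.1, u.2) : ℝ × ℝ × ℝ))).lintegral_prod_right').aemeasurable

lemma int_y (m : ℕ) (a k : ℝ) : ∫⁻ y, Gm m (a, y, k) =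
    (Set.Ioo 0 1).indicator (fun a => (Set.Ioi a).indicator
      (fun k => ENNReal.ofReal (a ^ 3 / (3 * k ^ 3)) * Fm m a k) k) a := by
  by_cases ha : a ∈ Set.Ioo (0 : ℝ) 1
  · rw [Set.indicator_of_mem ha]
    by_cases hk : k ∈ Set.Ioi a
    · rw [Set.indicator_of_mem hk]
      have hk' : a < k := hk
      have ha0 := ha.1
      have hk0 : 0 < k := ha0.trans hk'
      have : ∀ y, Gm m (a, y, k) = (Set.Ioo 0 (a / k)).indicator
          (fun y => ENNReal.ofReal (y ^ 2) * Fm m a k) y := by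
        intro y
        by_cases hy : y ∈ Set.Ioo 0 (a / k)
        · rw [Set.indicator_of_mem hy, Gm, Set.indicator_of_mem]
          have := (lt_div_iff₀ hk0).1 hy.2
          exact ⟨hy.1, hk0, by simp only; linarith, ha.2, hk'⟩
        · rw [Set.indicator_of_notMem hy, Gm, Set.indicator_of_notMem]
          rintro ⟨b1, _, b2, _⟩
          simp only at b1 b2
          exact hy ⟨b1, by rw [lt_div_iff₀ hk0]; linarith⟩
      rw [lintegral_congr this, lintegral_indicator measurableSet_Ioo,
        lintegral_mul_const _ (by fun_prop),
        lint_Ioo (by positivity) (by fun_prop) (fun x _ => by positivity)]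
      congr 2
      rw [integral_pow]
      field_simp
      norm_num
      rw [← mul_pow, mul_div_cancel₀ _ hk0.ne']
    · rw [Set.indicator_of_notMem hk]
      have : ∀ y, Gm m (a, y, k) = 0 := by
        intro y
        rw [Gm, Set.indicator_of_notMem]
        rintro ⟨_, _, _, _, h5⟩
        exact hk h5
      simp [this]
  · rw [Set.indicator_of_notMem ha]
    have : ∀ y, Gm m (a, y, k) = 0 := by
      intro y
      rw [Gm, Set.indicator_of_notMem]
      rintro ⟨h1, h2, h3, h4, h5⟩
      simp only at h1 h2 h3 h4
      exact ha ⟨lt_trans (by positivity) h3, h4⟩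
    simp [this]

/-- geometric sum -/
def geo (m : ℕ) (a : ℝ) : ℝ := ∑ j ∈ Finset.range m, (1 - a) ^ j

lemma geo_eq (m : ℕ) (a : ℝ) : a * geo m a = 1 - (1 - a) ^ m := by
  have := mul_neg_geom_sum (1 - a) m
  rw [geo, ← this]; ring

lemma int_k (m : ℕ) {a : ℝ} (ha : a ∈ Set.Ioo (0 : ℝ) 1) :
    ∫⁻ k in Set.Ioi a, ENNReal.ofReal (a ^ 3 / (3 * k ^ 3)) * Fm m a k =
      ENNReal.ofReal ((geo (m + 1) a / (m + 1) - geo (m + 2) a / (m + 2)) / 3) := by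
  have ha0 := ha.1
  have himg : Set.Ioi a = (fun v => a ^ 2 / v) '' Set.Ioo 0 a := by
    ext k
    simp only [Set.mem_Ioi, Set.mem_image, Set.mem_Ioo]
    constructor
    · intro hk
      have hk0 : 0 < k := ha0.trans hk
      refine ⟨a ^ 2 / k, ⟨by positivity, ?_⟩, by field_simp⟩
      rw [div_lt_iff₀ hk0]; nlinarith
    · rintro ⟨v, ⟨h1, h2⟩, rfl⟩
      rw [lt_div_iff₀ h1]; nlinarith
  rw [himg, lintegral_image_eq_lintegral_abs_deriv_mul (f' := fun v => -(a ^ 2 / v ^ 2))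
    measurableSet_Ioo]
  · have e1 : ∀ v ∈ Set.Ioo 0 a, ENNReal.ofReal |-(a ^ 2 / v ^ 2)| *
        (ENNReal.ofReal (a ^ 3 / (3 * (a ^ 2 / v) ^ 3)) * Fm m a (a ^ 2 / v)) =
        ENNReal.ofReal (1 / (3 * a) * ((1 - v) ^ m - (1 - v) ^ (m + 1))) := by
      intro v hv
      have hv0 := hv.1
      have hv1 : v < 1 := hv.2.trans ha.2
      have : a ^ 2 / (a ^ 2 / v) = v := by field_simp
      rw [Fm, this, abs_neg, abs_of_nonneg (by positivity), ← ENNReal.ofReal_pow (by linarith),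
        ← ENNReal.ofReal_mul (by positivity), ← ENNReal.ofReal_mul (by positivity)]
      congr 1
      rw [pow_succ]
      field_simp
      ring
    rw [setLIntegral_congr_fun measurableSet_Ioo e1, lint_Ioo ha0.le (by fun_prop)]
    · congr 1
      rw [intervalIntegral.integral_const_mul, intervalIntegral.integral_sub]
      · have hp : ∀ j : ℕ, ∫ v in (0 : ℝ)..a, (1 - v) ^ j = a * geo (j + 1) a / (j + 1) := by
          intro j
          rw [intervalIntegral.integral_comp_sub_left (fun x => x ^ j) 1, integral_pow, geo_eq]
          simp
        rw [hp, hp]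
        push_cast
        have : (m : ℝ) + 1 + 1 = m + 2 := by ring
        rw [this]
        field_simp
      · exact (by fun_prop : Continuous fun v : ℝ => (1 - v) ^ m).intervalIntegrable _ _
      · exact (by fun_prop : Continuous fun v : ℝ => (1 - v) ^ (m + 1)).intervalIntegrable _ _
    · intro v hv
      have hv0 := hv.1
      have hv1 : v < 1 := hv.2.trans ha.2
      have : 0 ≤ (1 - v) ^ m - (1 - v) ^ (m + 1) := by
        have h := pow_nonneg (by linarith : 0 ≤ 1 - v) m
        rw [pow_succ]; nlinarith
      positivity
  · intro v hv
    apply HasDerivAt.hasDerivWithinAt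
    have := (hasDerivAt_inv hv.1.ne').const_mul (a ^ 2)
    simp only [div_eq_mul_inv]
    exact this.congr_deriv (by ring)
  · intro v hv v' hv' h
    have h1 := hv.1
    have h2 := hv'.1
    simp only at h
    field_simp at h
    linarith

lemma int_geo (m : ℕ) : ∫ a in (0 : ℝ)..1, geo m a = (harmonic m : ℝ) := by
  unfold geo
  rw [intervalIntegral.integral_finsetSum]
  · rw [harmonic]
    push_cast
    refine Finset.sum_congr rfl fun j _ => ?_
    rw [intervalIntegral.integral_comp_sub_left (fun x => x ^ j) 1, integral_pow]
    simp
  · intro j _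
    exact (by fun_prop : Continuous fun v : ℝ => (1 - v) ^ j).intervalIntegrable _ _

lemma geo_nonneg (m : ℕ) {a : ℝ} (ha : a ∈ Set.Ioo (0 : ℝ) 1) :
    0 ≤ (geo (m + 1) a / (m + 1) - geo (m + 2) a / (m + 2)) / 3 := by
  have h1 : (m + 1 : ℝ) * (1 - a) ^ (m + 1) ≤ geo (m + 1) a := by
    have := Finset.card_nsmul_le_sum (Finset.range (m + 1)) (fun j => (1 - a) ^ j)
      ((1 - a) ^ (m + 1)) (fun j hj => by
        have := ha.1
        have := ha.2
        exact pow_le_pow_of_le_one (by linarith) (by linarith) (Finset.mem_range.1 hj).le)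
    rw [Finset.card_range, nsmul_eq_mul] at this
    push_cast at this
    exact this
  have h2 : geo (m + 2) a = geo (m + 1) a + (1 - a) ^ (m + 1) := by
    unfold geo; rw [Finset.sum_range_succ]
  have h3 : (geo (m + 1) a / (m + 1) - geo (m + 2) a / (m + 2)) / 3 =
      (geo (m + 1) a - (m + 1) * (1 - a) ^ (m + 1)) / (3 * (m + 1) * (m + 2)) := by
    rw [h2]; field_simp; ring
  rw [h3]
  exact div_nonneg (by linarith) (by positivity)

lemma continuous_geo (m : ℕ) : Continuous (geo m) := by unfold geo; fun_prop

lemma second_eq (m : ℕ) :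
    ∫⁻ z in T0, (∫⁻ w in Uz z, Fm m (z.1 + kap z w * z.2) (kap z w) ∂μT) =
      ENNReal.ofReal (((harmonic (m + 1) : ℝ) / (m + 1) - (harmonic (m + 2) : ℝ) / (m + 2)) / 3) := by
  rw [outer_eq]
  have e : ∀ a, ∫⁻ k, ∫⁻ y, Gm m (a, y, k) = (Set.Ioo (0 : ℝ) 1).indicator (fun a =>
      ENNReal.ofReal ((geo (m + 1) a / (m + 1) - geo (m + 2) a / (m + 2)) / 3)) a := by
    intro a
    simp_rw [int_y]
    by_cases ha : a ∈ Set.Ioo (0 : ℝ) 1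
    · simp only [Set.indicator_of_mem ha]
      rw [lintegral_indicator measurableSet_Ioi, int_k m ha]
    · simp only [Set.indicator_of_notMem ha]
      simp
  have c1 := continuous_geo (m + 1)
  have c2 := continuous_geo (m + 2)
  rw [lintegral_congr e, lintegral_indicator measurableSet_Ioo,
    lint_Ioo zero_le_one (by fun_prop) (fun a ha => geo_nonneg m ha)]
  congr 1
  rw [intervalIntegral.integral_div, intervalIntegral.integral_sub, intervalIntegral.integral_div,
    intervalIntegral.integral_div, int_geo, int_geo]
  · exact (c1.div_const _).intervalIntegrable _ _
  · exact (c2.div_const _).intervalIntegrable _ _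

lemma first_eq (m : ℕ) : ∫⁻ z in T0, ENNReal.ofReal (1 - z.2 / (1 - z.1)) ^ (m + 1) =
    ENNReal.ofReal (1 / (2 * (m + 2))) := by
  have hm : Measurable fun z : ℝ × ℝ => ENNReal.ofReal (1 - z.2 / (1 - z.1)) ^ (m + 1) := by
    fun_prop
  rw [← lintegral_indicator isOpen_T0.measurableSet, Measure.volume_eq_prod,
    lintegral_prod _ (hm.indicator isOpen_T0.measurableSet).aemeasurable]
  have e : ∀ x : ℝ, ∫⁻ y, T0.indicator
      (fun z => ENNReal.ofReal (1 - z.2 / (1 - z.1)) ^ (m + 1)) (x, y) =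
      (Set.Ioo (0 : ℝ) 1).indicator (fun x => ENNReal.ofReal ((1 - x) / (m + 2))) x := by
    intro x
    by_cases hx : x ∈ Set.Ioo (0 : ℝ) 1
    · rw [Set.indicator_of_mem hx]
      have hx1 : 0 < 1 - x := sub_pos.2 hx.2
      have e2 : ∀ y, T0.indicator (fun z => ENNReal.ofReal (1 - z.2 / (1 - z.1)) ^ (m + 1)) (x, y) =
          (Set.Ioo 0 (1 - x)).indicator
            (fun y => ENNReal.ofReal ((1 - y / (1 - x)) ^ (m + 1))) y := by
        intro y
        by_cases hy : y ∈ Set.Ioo 0 (1 - x)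
        · rw [Set.indicator_of_mem hy, Set.indicator_of_mem, ENNReal.ofReal_pow]
          · rw [sub_nonneg, div_le_one hx1]; exact hy.2.le
          · exact ⟨hx.1, hy.1, by have := hy.2; simp only; linarith⟩
        · rw [Set.indicator_of_notMem hy, Set.indicator_of_notMem]
          rintro ⟨_, h2, h3⟩
          simp only at h2 h3
          exact hy ⟨h2, by linarith⟩
      rw [lintegral_congr e2, lintegral_indicator measurableSet_Ioo, lint_Ioo hx1.le (by fun_prop)]
      · congr 1
        rw [intervalIntegral.integral_comp_sub_div (fun u => u ^ (m + 1)) hx1.ne', integral_pow]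
        simp [hx1.ne']
        field_simp
        ring
      · intro y hy
        apply pow_nonneg
        rw [sub_nonneg, div_le_one hx1]; exact hy.2.le
    · rw [Set.indicator_of_notMem hx]
      have : ∀ y, T0.indicator
          (fun z => ENNReal.ofReal (1 - z.2 / (1 - z.1)) ^ (m + 1)) (x, y) = 0 := by
        intro y
        apply Set.indicator_of_notMem
        rintro ⟨h1, h2, h3⟩
        simp only at h1 h2 h3
        exact hx ⟨h1, by linarith⟩
      simp [this]
  rw [lintegral_congr e, lintegral_indicator measurableSet_Ioo, lint_Ioo zero_le_one (by fun_prop)]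
  · congr 1
    rw [intervalIntegral.integral_div, intervalIntegral.integral_sub (by simp) (by simp)]
    simp
    field_simp
    norm_num
  · intro x hx
    have := hx.2
    exact div_nonneg (by linarith) (by positivity)


/-- Expected missing area (extended). -/
lemma lint_missing (m : ℕ) :
    ∫⁻ ω, volume (T0 \ Tchain (m + 1) ω) ∂P (m + 1) =
      ENNReal.ofReal (1 / (2 * (m + 2)) +
        (m + 1) * (((harmonic (m + 1) : ℝ) / (m + 1) - (harmonic (m + 2) : ℝ) / (m + 2)) / 3)) := by
  have hM : MeasurableSet (Miss (m + 1)) := (isOpen_Miss _).measurableSet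
  have e1 : ∫⁻ ω, volume (T0 \ Tchain (m + 1) ω) ∂P (m + 1) =
      ((P (m + 1)).prod volume) (Miss (m + 1)) := by
    rw [Measure.prod_apply hM]; rfl
  have hpz : Measurable fun z : ℝ × ℝ => ENNReal.ofReal (1 - z.2 / (1 - z.1)) ^ (m + 1) := by
    fun_prop
  rw [e1, Measure.prod_apply_symm hM]
  have e2 : ∀ z : ℝ × ℝ, P (m + 1) ((fun ω => (ω, z)) ⁻¹' Miss (m + 1)) = T0.indicator (pz m) z := by
    intro z
    by_cases hz : z ∈ T0
    · rw [Set.indicator_of_mem hz, ← prob_eq m hz]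
      congr 1; ext ω; simp [Miss, hz]
    · rw [Set.indicator_of_notMem hz]
      have : (fun ω => (ω, z)) ⁻¹' Miss (m + 1) = ∅ := by ext ω; simp [Miss, hz]
      simp [this]
  rw [lintegral_congr e2, lintegral_indicator isOpen_T0.measurableSet]
  unfold pz
  rw [lintegral_add_left hpz, first_eq, lintegral_const_mul' _ _ (by simp)]
  have e3 := second_eq m
  unfold Fm at e3
  rw [e3, ENNReal.ofReal_add (by positivity), ENNReal.ofReal_mul (by positivity)]
  · congr 2
    rw [← ENNReal.ofReal_natCast]; push_cast; rfl
  · apply mul_nonneg (by positivity)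
    have : ∫ a in (0 : ℝ)..1, (geo (m + 1) a / (m + 1) - geo (m + 2) a / (m + 2)) / 3 =
        (((harmonic (m + 1) : ℝ) / (m + 1) - (harmonic (m + 2) : ℝ) / (m + 2)) / 3) := by
      rw [intervalIntegral.integral_div, intervalIntegral.integral_sub,
        intervalIntegral.integral_div, intervalIntegral.integral_div, int_geo, int_geo]
      · exact ((continuous_geo _).div_const _).intervalIntegrable _ _
      · exact ((continuous_geo _).div_const _).intervalIntegrable _ _
    rw [← this, intervalIntegral.integral_of_le zero_le_one, integral_Ioc_eq_integral_Ioo]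
    exact setIntegral_nonneg measurableSet_Ioo fun a ha => geo_nonneg m ha

lemma ae_T (n : ℕ) : ∀ᵐ ω ∂P n, ∀ i, ω i ∈ T := by
  rw [ae_all_iff]
  intro i
  have h : ∀ᵐ w ∂μT, w ∈ T := by
    unfold μT
    exact Measure.ae_smul_measure (ae_restrict_mem measurableSet_T) 2
  have := (measurePreserving_eval (fun _ : Fin n => μT) i).quasiMeasurePreserving.ae h
  exact this

lemma vol_chain {n : ℕ} {ω : Fin n → ℝ × ℝ} (h : ∀ i, ω i ∈ T) :
    (volume (Tchain n ω)).toReal = 1 / 2 - (volume (T0 \ Tchain n ω)).toReal := by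
  have hm : MeasurableSet (Tchain n ω) := by
    have : IsCompact (Tchain n ω) := by
      apply Set.Finite.isCompact_convexHull
      exact (Set.finite_range ω).union (by simp)
    exact this.isClosed.measurableSet
  have hsub : Tchain n ω ⊆ T := by
    apply convexHull_min _ (convex_convexHull ℝ _)
    rintro q (⟨i, rfl⟩ | rfl | rfl)
    · exact h i
    · exact subset_convexHull ℝ _ (by simp)
    · exact subset_convexHull ℝ _ (by simp)
  have hT0T : T0 ⊆ T := fun p hp => by
    rw [mem_T_iff]; exact ⟨hp.1.le, hp.2.1.le, hp.2.2.le⟩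
  have hnull : volume (T \ T0) = 0 := by
    rw [measure_sdiff hT0T isOpen_T0.measurableSet.nullMeasurableSet (by simp [vol_T0]), vol_T,
      vol_T0]
    simp
  have e1 : volume (Tchain n ω) = volume (T0 ∩ Tchain n ω) := by
    apply le_antisymm
    · have : Tchain n ω ⊆ (T0 ∩ Tchain n ω) ∪ (T \ T0) := by
        intro p hp
        by_cases h0 : p ∈ T0
        · exact Or.inl ⟨h0, hp⟩
        · exact Or.inr ⟨hsub hp, h0⟩
      calc volume (Tchain n ω) ≤ volume (T0 ∩ Tchain n ω) + volume (T \ T0) :=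
            (measure_mono this).trans (measure_union_le _ _)
        _ = _ := by rw [hnull, add_zero]
    · exact measure_mono Set.inter_subset_right
  have e2 := measure_inter_add_sdiff (μ := volume) T0 hm
  rw [← e1, vol_T0] at e2
  have f1 : volume (Tchain n ω) ≠ ⊤ := fun hh => by
    rw [hh] at e2
    have e4 := e2.symm
    simp at e4
  have f2 : volume (T0 \ Tchain n ω) ≠ ⊤ := fun hh => by
    rw [hh] at e2
    have e4 := e2.symm
    simp at e4
  have e3 := congrArg ENNReal.toReal e2
  rw [ENNReal.toReal_add f1 f2, ENNReal.toReal_ofReal (by norm_num)] at e3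
  linarith

lemma expected (m : ℕ) : ∫ ω, (volume (Tchain (m + 1) ω)).toReal ∂P (m + 1) =
    1 / 2 - (1 / (2 * (m + 2)) +
        (m + 1) * (((harmonic (m + 1) : ℝ) / (m + 1) - (harmonic (m + 2) : ℝ) / (m + 2)) / 3)) := by
  have hM : MeasurableSet (Miss (m + 1)) := (isOpen_Miss _).measurableSet
  have hmeas : Measurable fun ω => volume (T0 \ Tchain (m + 1) ω) :=
    measurable_measure_prodMk_left (ν := (volume : Measure (ℝ × ℝ))) hM
  have hle : ∀ ω, volume (T0 \ Tchain (m + 1) ω) ≤ ENNReal.ofReal (1 / 2) := fun ω => by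
    rw [← vol_T0]; exact measure_mono Set.sdiff_subset
  have hfin : ∀ ω, volume (T0 \ Tchain (m + 1) ω) < ⊤ := fun ω =>
    (hle ω).trans_lt ENNReal.ofReal_lt_top
  have e0 : ∫ ω, (volume (Tchain (m + 1) ω)).toReal ∂P (m + 1) =
      ∫ ω, (1 / 2 - (volume (T0 \ Tchain (m + 1) ω)).toReal) ∂P (m + 1) := by
    apply integral_congr_ae
    filter_upwards [ae_T (m + 1)] with ω hω
    exact vol_chain hω
  have hInt : Integrable (fun ω => (volume (T0 \ Tchain (m + 1) ω)).toReal) (P (m + 1)) := by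
    apply integrable_toReal_of_lintegral_ne_top hmeas.aemeasurable
    rw [lint_missing]; exact ENNReal.ofReal_ne_top
  rw [e0, integral_sub (integrable_const _) hInt, integral_toReal hmeas.aemeasurable
    (Filter.Eventually.of_forall hfin), lint_missing, ENNReal.toReal_ofReal]
  · simp
  · apply add_nonneg (by positivity)
    apply mul_nonneg (by positivity)
    have h2 : (harmonic (m + 2) : ℝ) = harmonic (m + 1) + 1 / (m + 2) := by
      rw [harmonic_succ]; push_cast; rw [one_div]; ring
    have h1 : 1 ≤ (harmonic (m + 1) : ℝ) := by
      have : (1 : ℚ) ≤ harmonic (m + 1) := by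
        rw [harmonic, Finset.sum_range_succ']
        have : (0 : ℚ) ≤ ∑ k ∈ Finset.range m, (((k + 1 : ℕ) + 1 : ℕ) : ℚ)⁻¹ :=
          Finset.sum_nonneg fun i _ => by positivity
        push_cast at this ⊢
        norm_num
        linarith
      exact_mod_cast this
    rw [h2]
    have h3 : ((harmonic (m + 1) : ℝ) / (m + 1) - (harmonic (m + 1) + 1 / (m + 2)) / (m + 2)) / 3 =
      ((harmonic (m + 1) : ℝ) * (m + 2) - (m + 1)) / (3 * (m + 1) * (m + 2) ^ 2) := by
      field_simp; ring
    rw [h3]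
    refine div_nonneg ?_ (by positivity)
    have : (0 : ℝ) ≤ m := Nat.cast_nonneg m
    nlinarith


/-- `E[vol(T_n)] = 1/2 - (log n)/(3n) + O(n⁻¹)`. -/
theorem stmt17 :
    ∃ C > (0 : ℝ), ∃ n₀ : ℕ, ∀ n ≥ n₀,
      |(∫ ω, (volume (Tchain n ω)).toReal ∂ P n) - 1 / 2 + Real.log n / (3 * n)|
        ≤ C / n := by
  refine ⟨2, by norm_num, 1, fun n hn => ?_⟩
  obtain ⟨m, rfl⟩ : ∃ m, n = m + 1 := ⟨n - 1, by omega⟩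
  rw [expected]
  have h2 : (harmonic (m + 2) : ℝ) = harmonic (m + 1) + 1 / (m + 2) := by
    rw [harmonic_succ]; push_cast; rw [one_div]; ring
  have l1 := log_add_one_le_harmonic (m + 1)
  have l2 := harmonic_le_one_add_log (m + 1)
  set h : ℝ := (harmonic (m + 1) : ℝ) with hh
  have hx0 : (0 : ℝ) ≤ m := Nat.cast_nonneg m
  have l3 : Real.log ((m + 1 : ℕ) : ℝ) ≤ Real.log ((m + 1 + 1 : ℕ) : ℝ) :=
    Real.log_le_log (by positivity) (by push_cast; linarith)
  have l4 : 0 ≤ Real.log ((m + 1 : ℕ) : ℝ) := Real.log_natCast_nonneg _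
  have l5 : Real.log ((m + 1 : ℕ) : ℝ) ≤ m + 1 := by
    have := Real.log_le_sub_one_of_pos (by positivity : (0 : ℝ) < ((m + 1 : ℕ) : ℝ))
    push_cast at this ⊢; linarith
  rw [h2]
  push_cast at *
  set L := Real.log ((m : ℝ) + 1) with hL
  clear_value L
  generalize (m : ℝ) = x at *
  have key : 1 / 2 - (1 / (2 * (x + 2)) + (x + 1) * ((h / (x + 1) - (h + 1 / (x + 2)) / (x + 2)) / 3))
      - 1 / 2 + L / (3 * (x + 1)) =
      ((L - h) * (x + 1) * (x + 2) + L * (x + 2) - 3 / 2 * (x + 1) * (x + 2) + (x + 1) ^ 2)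
        / (3 * (x + 1) * (x + 2) ^ 2) := by
    field_simp
    ring
  rw [key, abs_le]
  have hp : 0 < 3 * (x + 1) * (x + 2) ^ 2 := by positivity
  have d1 : L - h ≤ 0 := by linarith
  have d2 : -1 ≤ L - h := by linarith
  have e1 := mul_nonneg (by linarith : 0 ≤ 1 + (L - h)) (by positivity : 0 ≤ (x + 1) * (x + 2))
  have e2 := mul_nonneg (by linarith : 0 ≤ -(L - h)) (by positivity : 0 ≤ (x + 1) * (x + 2))
  have e3 := mul_nonneg (by linarith : 0 ≤ (x + 1) - L) (by positivity : 0 ≤ (x + 2))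
  have e4 := mul_nonneg l4 (by positivity : 0 ≤ (x + 2))
  constructor
  · rw [le_div_iff₀ hp, show -(2 / (x + 1)) * (3 * (x + 1) * (x + 2) ^ 2) = -(6 * (x + 2) ^ 2) by
      field_simp; ring]
    nlinarith
  · rw [div_le_iff₀ hp, show 2 / (x + 1) * (3 * (x + 1) * (x + 2) ^ 2) = 6 * (x + 2) ^ 2 by
      field_simp; ring]
    nlinarith

end
end
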